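/- arXiv:2502.20863 — 3 statements merged into one kernel-verified Lean document; each statement's English description precedes it below -/
import Mathlib

section
/- For every integer k ≥ 2 there exists a constant c_k > 0 such that for all integers Δ ≥ 1/c_k and n ≥ Δ, there exists a k-uniform hypergraph H on n vertices with maximum degree at most Δ whose 4-color Ramsey number satisfies r(H;4) ≥ tw_k(c_k·Δ)·n. -/
noncomputable section

/-- The tower function over the reals: `tw 1 x = x` and `tw k x = 2 ^ (tw (k-1) x)`
for `k ≥ 2`. -/
def twR : ℕ → ℝ → ℝ
  | 0, x => x
  | 1, x => x
  | (k + 2), x => (2 : ℝ) ^ twR (k + 1) x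

/-- `arrowsProp n N q E` says that every `q`-coloring of the subsets of an `N`-element
set yields a monochromatic copy of the hypergraph on `[n]` with edge set `E`. -/
def arrowsProp (n N q : ℕ) (E : Finset (Finset (Fin n))) : Prop :=
  ∀ χ : Finset (Fin N) → Fin q, ∃ f : Fin n ↪ Fin N, ∃ i : Fin q,
    ∀ e ∈ E, χ (e.map f) = i

/-- The `q`-color Ramsey number of the hypergraph on `[n]` with edge set `E`: the least `N`
such that every `q`-coloring of the subsets of an `N`-element set contains a monochromatic
copy. -/
def ramseyNumber (n q : ℕ) (E : Finset (Finset (Fin n))) : ℕ :=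
  sInf {N | arrowsProp n N q E}

/-!
Call a `k`-coloring of `{0, …, T - 1}` good if there are no `m` disjoint blocks of bounded size such
that all `k`-sets inside a union of two blocks have the same color. Random graph colorings are good
for `T = 2 ^ p` and `m = O(p)`, and the stepping-up construction, which colors a set by the set of
highest binary digits in which its elements differ, turns good `k`-colorings for `T` into good
`(k + 1)`-colorings for `2 ^ T` while `m` is at most doubled. Hence there are good colorings with
`T = tw_k(p)` and `m = O(p)`.

A good coloring is blown up by replacing each point with an interval of `n - 1` points. The edges
of the hypergraph are the `k`-sets covered by two nearby windows of bounded length in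
`{0, …, n - 1}`. In a monochromatic copy of it, either every window has its middle part spread over
different intervals, which gives `m` monochromatic blocks of the good coloring, or some window lies
in a single interval. In the latter case so do all windows near it, and hence all `n` vertices,
which is impossible.
-/

open Finset

/-! ### Top differences and blocks -/

section TopDiff

/-- The position of the highest binary digit in which `x` and `y` differ (`δ(x, y)` in the
stepping-up literature). The value at `x = y` is the junk value `0`. -/
def topDiff (x y : ℕ) : ℕ := Nat.log2 (x ^^^ y)

variable {x y z d M : ℕ}

lemma topDiff_comm (x y : ℕ) : topDiff x y = topDiff y x := by
  rw [topDiff, topDiff, Nat.xor_comm]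

lemma topDiff_lt_iff (h : x ≠ y) : topDiff x y < d ↔ x / 2 ^ d = y / 2 ^ d := by
  have hxor : x ^^^ y ≠ 0 := by rwa [Ne, Nat.xor_eq_zero_iff]
  rw [topDiff, Nat.log2_lt hxor, ← Nat.shiftRight_eq_div_pow, ← Nat.shiftRight_eq_div_pow,
    ← Nat.xor_eq_zero_iff, ← Nat.shiftRight_xor_distrib, Nat.shiftRight_eq_div_pow,
    Nat.div_eq_zero_iff_lt (by positivity)]

lemma topDiff_lt_of_lt_two_pow (h : x ≠ y) (hx : x < 2 ^ M) (hy : y < 2 ^ M) :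
    topDiff x y < M := by
  rw [topDiff_lt_iff h, Nat.div_eq_of_lt hx, Nat.div_eq_of_lt hy]

lemma topDiff_eq_of_topDiff_lt (h : topDiff y z < topDiff x y) :
    topDiff x z = topDiff x y := by
  rcases eq_or_ne y z with rfl | hyz
  · rfl
  have hxy : x ≠ y := by rintro rfl; simp [topDiff] at h
  have hxz : x ≠ z := by rintro rfl; exact h.ne (topDiff_comm _ _)
  have hyz_eq {d : ℕ} (hd : topDiff x y ≤ d) : y / 2 ^ d = z / 2 ^ d :=
    (topDiff_lt_iff hyz).1 (h.trans_le hd)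
  apply le_antisymm
  · rw [← Nat.lt_succ_iff, topDiff_lt_iff hxz, ← hyz_eq (Nat.le_succ _), ← topDiff_lt_iff hxy]
    exact Nat.lt_succ_self _
  · by_contra! hlt
    rw [topDiff_lt_iff hxz, ← hyz_eq le_rfl, ← topDiff_lt_iff hxy] at hlt
    exact lt_irrefl _ hlt

-- At a common top difference, `y` would have digit `1` against `x` and digit `0` against `z`.
lemma topDiff_ne_topDiff (hxy : x < y) (hyz : y < z) : topDiff x y ≠ topDiff y z := by
  intro h
  have hiff (d : ℕ) : topDiff x y < d ↔ y / 2 ^ d = z / 2 ^ d := by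
    rw [h]
    exact topDiff_lt_iff hyz.ne
  have hxy_eq := (topDiff_lt_iff hxy.ne).1 (Nat.lt_succ_self (topDiff x y))
  have hyz_eq := (hiff _).1 (Nat.lt_succ_self (topDiff x y))
  have hxy_ne := mt (topDiff_lt_iff hxy.ne).2 (lt_irrefl (topDiff x y))
  have hyz_ne := mt (hiff _).2 (lt_irrefl (topDiff x y))
  have hxy_le : x / 2 ^ topDiff x y ≤ y / 2 ^ topDiff x y := Nat.div_le_div_right hxy.le
  have hyz_le : y / 2 ^ topDiff x y ≤ z / 2 ^ topDiff x y := Nat.div_le_div_right hyz.le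
  simp only [Nat.succ_eq_add_one, pow_succ, ← Nat.div_div_eq_div_mul] at hxy_eq hyz_eq
  omega

/-- The set of all top differences between distinct elements of `e`. -/
def topDiffs (e : Finset ℕ) : Finset ℕ := e.offDiag.image fun p ↦ topDiff p.1 p.2

lemma mem_topDiffs {e : Finset ℕ} {v : ℕ} :
    v ∈ topDiffs e ↔ ∃ x ∈ e, ∃ y ∈ e, x ≠ y ∧ topDiff x y = v := by
  simp only [topDiffs, mem_image, mem_offDiag, Prod.exists]
  grind

lemma topDiffs_mono {e e' : Finset ℕ} (h : e ⊆ e') : topDiffs e ⊆ topDiffs e' :=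
  image_subset_image (offDiag_mono h)

lemma topDiffs_subset_range {e : Finset ℕ} (h : e ⊆ range (2 ^ M)) : topDiffs e ⊆ range M := by
  intro v hv
  obtain ⟨x, hx, y, hy, hxy, rfl⟩ := mem_topDiffs.1 hv
  exact mem_range.2 (topDiff_lt_of_lt_two_pow hxy (mem_range.1 (h hx)) (mem_range.1 (h hy)))

end TopDiff

section Comb

/-- `e` is a comb with respect to the order `r` if consecutive top differences decrease along `r`.
With `r = (· < ·)` the sequence of top differences of `e` is decreasing, and with `r = (· > ·)` it
is increasing. -/
def IsComb (r : ℕ → ℕ → Prop) (e : Finset ℕ) : Prop :=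
  ∀ x ∈ e, ∀ y ∈ e, ∀ z ∈ e, r x y → r y z → topDiff y z < topDiff x y

variable {r : ℕ → ℕ → Prop} {e Y : Finset ℕ}

lemma IsComb.mono (hY : IsComb r Y) (h : e ⊆ Y) : IsComb r e :=
  fun x hx y hy z hz ↦ hY x (h hx) y (h hy) z (h hz)

variable [IsStrictTotalOrder ℕ r]

lemma IsComb.topDiff_eq (hY : IsComb r Y) {x y z : ℕ} (hx : x ∈ Y) (hy : y ∈ Y) (hz : z ∈ Y)
    (hxy : r x y) (hxz : r x z) : topDiff x y = topDiff x z := by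
  rcases trichotomous_of r y z with hyz | rfl | hzy
  · exact (topDiff_eq_of_topDiff_lt (hY x hx y hy z hz hxy hyz)).symm
  · rfl
  · exact topDiff_eq_of_topDiff_lt (hY x hx z hz y hy hxz hzy)

lemma IsComb.eq_of_topDiff_eq (hY : IsComb r Y) {x y x' y' : ℕ} (hx : x ∈ Y) (hy : y ∈ Y)
    (hx' : x' ∈ Y) (hy' : y' ∈ Y) (hxy : r x y) (hxy' : r x' y')
    (h : topDiff x y = topDiff x' y') : x = x' := by
  rcases trichotomous_of r x x' with hlt | rfl | hlt
  · have := hY x hx x' hx' y' hy' hlt hxy'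
    have := hY.topDiff_eq hx hx' hy hlt hxy
    omega
  · rfl
  · have := hY x' hx' x hx y hy hlt hxy
    have := hY.topDiff_eq hx' hx hy' hlt hxy'
    omega

lemma exists_rel_of_mem_topDiffs (r : ℕ → ℕ → Prop) [IsStrictTotalOrder ℕ r] {v : ℕ}
    (hv : v ∈ topDiffs Y) : ∃ x ∈ Y, ∃ y ∈ Y, r x y ∧ topDiff x y = v := by
  obtain ⟨x, hx, y, hy, hne, rfl⟩ := mem_topDiffs.1 hv
  rcases trichotomous_of r x y with h | rfl | h
  · exact ⟨x, hx, y, hy, h, rfl⟩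
  · exact absurd rfl hne
  · exact ⟨y, hy, x, hx, h, topDiff_comm y x⟩

lemma exists_eq_insert_top (r : ℕ → ℕ → Prop) [IsStrictTotalOrder ℕ r] (hY : Y.Nonempty) :
    ∃ τ X, Y = insert τ X ∧ ∀ x ∈ X, r x τ := by
  classical
  obtain ⟨τ, hτ, hmax⟩ := @exists_max_image ℕ ℕ (linearOrderOfSTO r) Y id hY
  exact ⟨τ, Y.erase τ, (insert_erase hτ).symm, fun x hx ↦
    (hmax x (mem_of_mem_erase hx)).resolve_left (ne_of_mem_erase hx)⟩

variable {τ : ℕ} {X : Finset ℕ}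

lemma IsComb.topDiffs_insert_top (hX : IsComb r (insert τ X)) (hτ : ∀ x ∈ X, r x τ) :
    topDiffs (insert τ X) = X.image (topDiff · τ) := by
  ext v
  constructor
  · intro hv
    obtain ⟨x, hx, y, hy, hxy, rfl⟩ := exists_rel_of_mem_topDiffs r hv
    rcases mem_insert.1 hx with rfl | hxX
    · rcases mem_insert.1 hy with rfl | hyX
      · exact absurd hxy (irrefl _)
      · exact absurd hxy (asymm (hτ y hyX))
    · exact mem_image.2 ⟨x, hxX, hX.topDiff_eq hx (mem_insert_self τ X) hy (hτ x hxX) hxy⟩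
  · intro hv
    obtain ⟨x, hx, rfl⟩ := mem_image.1 hv
    exact mem_topDiffs.2 ⟨x, mem_insert_of_mem hx, τ, mem_insert_self τ X, ne_of_irrefl (hτ x hx),
      rfl⟩

lemma IsComb.card_topDiffs_insert_top (hX : IsComb r (insert τ X)) (hτ : ∀ x ∈ X, r x τ) :
    #(insert τ X) = #(topDiffs (insert τ X)) + 1 := by
  have hinj : Set.InjOn (topDiff · τ) X := fun x hx y hy h ↦
    hX.eq_of_topDiff_eq (mem_insert_of_mem hx) (mem_insert_self τ X) (mem_insert_of_mem hy)
      (mem_insert_self τ X) (hτ x hx) (hτ y hy) h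
  rw [hX.topDiffs_insert_top hτ, card_image_of_injOn hinj,
    card_insert_of_notMem fun h ↦ irrefl τ (hτ τ h)]

lemma IsComb.card_eq_card_topDiffs_add_one (hY : IsComb r Y) (hne : Y.Nonempty) :
    #Y = #(topDiffs Y) + 1 := by
  obtain ⟨τ, X, rfl, hτ⟩ := exists_eq_insert_top r hne
  exact hY.card_topDiffs_insert_top hτ

lemma IsComb.exists_subset_topDiffs_eq (hY : IsComb r Y) (hne : Y.Nonempty) {S : Finset ℕ}
    (hS : S ⊆ topDiffs Y) : ∃ e ⊆ Y, #e = #S + 1 ∧ topDiffs e = S := by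
  obtain ⟨τ, X, rfl, hτ⟩ := exists_eq_insert_top r hne
  rw [hY.topDiffs_insert_top hτ] at hS
  obtain ⟨X', hX', rfl⟩ := subset_image_iff.1 hS
  have hsub : insert τ X' ⊆ insert τ X := insert_subset_insert τ hX'
  have hτ' : ∀ x ∈ X', r x τ := fun x hx ↦ hτ x (hX' hx)
  refine ⟨insert τ X', hsub, ?_, (hY.mono hsub).topDiffs_insert_top hτ'⟩
  rw [← (hY.mono hsub).topDiffs_insert_top hτ', (hY.mono hsub).card_topDiffs_insert_top hτ']

lemma IsComb.disjoint_topDiffs {A B : Finset ℕ} (h : IsComb r (A ∪ B)) (hAB : Disjoint A B) :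
    Disjoint (topDiffs A) (topDiffs B) := by
  rw [disjoint_left]
  intro v hA hB
  obtain ⟨x, hx, y, hy, hxy, rfl⟩ := exists_rel_of_mem_topDiffs r hA
  obtain ⟨x', hx', y', hy', hxy', heq⟩ := exists_rel_of_mem_topDiffs r hB
  obtain rfl : x = x' := h.eq_of_topDiff_eq (mem_union_left B hx) (mem_union_left B hy)
    (mem_union_right A hx') (mem_union_right A hy') hxy hxy' heq.symm
  exact disjoint_left.1 hAB hx hx'

end Comb

section Blocks

variable {κ κ' ι ι' : Type*} {χ : Finset ℕ → κ} {k m t T : ℕ}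

/-- All `k`-subsets of `Y` have color `c`. -/
def IsMonoOn (χ : Finset ℕ → κ) (k : ℕ) (Y : Finset ℕ) (c : κ) : Prop :=
  ∀ e ⊆ Y, #e = k → χ e = c

lemma IsMonoOn.mono {Y Z : Finset ℕ} {c : κ} (hY : IsMonoOn χ k Y c) (h : Z ⊆ Y) :
    IsMonoOn χ k Z c :=
  fun e he ↦ hY e (he.trans h)

/-- A family of pairwise disjoint subsets of `{0, …, T - 1}`, each with at least `t` elements. -/
structure BlockFamily (T t : ℕ) (A : ι → Finset ℕ) : Prop where
  subset_range : ∀ i, A i ⊆ range T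
  le_card : ∀ i, t ≤ #(A i)
  disjoint : ∀ i j, i ≠ j → Disjoint (A i) (A j)

lemma BlockFamily.of_subset {s : ℕ} {A : ι → Finset ℕ} {B : ι' → Finset ℕ}
    (hA : BlockFamily T s A) (f : ι' ↪ ι) (hB : ∀ i, B i ⊆ A (f i)) (ht : ∀ i, t ≤ #(B i)) :
    BlockFamily T t B where
  subset_range i := (hB i).trans (hA.subset_range _)
  le_card := ht
  disjoint i j hij := (hA.disjoint _ _ (f.injective.ne hij)).mono (hB i) (hB j)

/-- The property of colorings that is stepped up: no `m` disjoint subsets of `{0, …, T - 1}` with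
at least `t` elements each are such that all `k`-sets contained in the union of two of them have the
same color. It is far stronger than having no monochromatic clique, and it is what a hypergraph of
bounded degree can detect. -/
def NoMonoBlocks (χ : Finset ℕ → κ) (k T m t : ℕ) : Prop :=
  ∀ A : Fin m → Finset ℕ, BlockFamily T t A → ∀ c, ¬ ∀ i j, IsMonoOn χ k (A i ∪ A j) c

lemma NoMonoBlocks.comp_injective (h : NoMonoBlocks χ k T m t) {f : κ → κ'}
    (hf : Function.Injective f) : NoMonoBlocks (f ∘ χ) k T m t := by
  intro A hA c hc
  by_cases hrange : ∃ c', f c' = c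
  · obtain ⟨c', rfl⟩ := hrange
    exact h A hA c' fun i j e he hek ↦ hf (hc i j e he hek)
  · have hnone : ∀ i j, ∀ e ⊆ A i ∪ A j, #e ≠ k := fun i j e he hek ↦
      hrange ⟨χ e, hc i j e he hek⟩
    exact h A hA (χ ∅) fun i j e he hek ↦ absurd hek (hnone i j e he)

lemma NoMonoBlocks.not_forall_isMonoOn_of_isComb {M : ℕ} (h : NoMonoBlocks χ k M m t)
    {r : ℕ → ℕ → Prop} [IsStrictTotalOrder ℕ r] {B : Fin m → Finset ℕ}
    (hB : BlockFamily (2 ^ M) (t + 1) B) (hcomb : ∀ i j, IsComb r (B i ∪ B j)) (c : κ) :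
    ¬ ∀ i j, IsMonoOn (fun e ↦ χ (topDiffs e)) (k + 1) (B i ∪ B j) c := by
  intro hmono
  have hne (i) : (B i).Nonempty := card_pos.1 (by have := hB.le_card i; omega)
  refine h (fun i ↦ topDiffs (B i)) ⟨fun i ↦ topDiffs_subset_range (hB.subset_range i),
    fun i ↦ ?_, fun i j hij ↦ (hcomb i j).disjoint_topDiffs (hB.disjoint i j hij)⟩ c ?_
  · have hi := ((hcomb i i).mono subset_union_left).card_eq_card_topDiffs_add_one (hne i)
    have := hB.le_card i
    omega
  · intro i j S hS hSk
    have hS' : S ⊆ topDiffs (B i ∪ B j) := hS.trans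
      (union_subset (topDiffs_mono subset_union_left) (topDiffs_mono subset_union_right))
    obtain ⟨e, he, hek, rfl⟩ :=
      (hcomb i j).exists_subset_topDiffs_eq ((hne i).mono subset_union_left) hS'
    exact hmono i j e he (by rw [hek, hSk])

end Blocks

/-! ### Stepping up -/

section StepUpTwo

variable {κ : Type*} {φ : Finset ℕ → κ} {M m : ℕ}

lemma card_triple {x y z : ℕ} (hxy : x < y) (hyz : y < z) : #{x, y, z} = 3 :=
  card_eq_three.2 ⟨x, y, z, hxy.ne, (hxy.trans hyz).ne, hyz.ne, rfl⟩

lemma isComb_lt_triple_iff {x y z : ℕ} (hxy : x < y) (hyz : y < z) :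
    IsComb (· < ·) {x, y, z} ↔ topDiff y z < topDiff x y := by
  refine ⟨fun h ↦ h x (by simp) y (by simp) z (by simp) hxy hyz, fun h a ha b hb c hc hab hbc ↦ ?_⟩
  simp only [mem_insert, mem_singleton] at ha hb hc
  obtain ⟨rfl, rfl, rfl⟩ : a = x ∧ b = y ∧ c = z := by omega
  exact h

open Classical in
lemma isComb_of_forall_decide_eq {Y : Finset ℕ} {b : Bool}
    (h : IsMonoOn (fun e ↦ decide (IsComb (· < ·) e)) 3 Y b) :
    if b then IsComb (· < ·) Y else IsComb (· > ·) Y := by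
  have htriple {x y z : ℕ} (hx : x ∈ Y) (hy : y ∈ Y) (hz : z ∈ Y) (hxy : x < y) (hyz : y < z) :
      decide (topDiff y z < topDiff x y) = b := by
    rw [← h {x, y, z} (by grind) (card_triple hxy hyz)]
    exact decide_eq_decide.2 (isComb_lt_triple_iff hxy hyz).symm
  cases b
  · intro x hx y hy z hz hyx hzy
    have hle := not_lt.1 (of_decide_eq_false (htriple hz hy hx hzy hyx))
    rw [topDiff_comm y z, topDiff_comm x y]
    exact hle.lt_of_ne (topDiff_ne_topDiff hzy hyx)
  · exact fun x hx y hy z hz hxy hyz ↦ of_decide_eq_true (htriple hx hy hz hxy hyz)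

open Classical in
lemma NoMonoBlocks.stepUp_two (h : NoMonoBlocks φ 2 M m 1) :
    NoMonoBlocks (fun e ↦ (decide (IsComb (· < ·) e), φ (topDiffs e))) 3 (2 ^ M) m 2 := by
  rintro A hA ⟨b, c⟩ hmono
  have hcomb (i j : Fin m) :=
    isComb_of_forall_decide_eq fun e he hek ↦ congr_arg Prod.fst (hmono i j e he hek)
  have hcolor (i j : Fin m) : IsMonoOn (fun e ↦ φ (topDiffs e)) 3 (A i ∪ A j) c :=
    fun e he hek ↦ congr_arg Prod.snd (hmono i j e he hek)
  cases b
  · exact h.not_forall_isMonoOn_of_isComb (r := (· > ·)) hA hcomb c hcolor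
  · exact h.not_forall_isMonoOn_of_isComb (r := (· < ·)) hA hcomb c hcolor

end StepUpTwo

section Trim

variable {α : Type*} (r : α → α → Prop) [DecidableRel r] {k : ℕ} {s s' : Finset α} {y : α}

/-- `s` without its `k` least elements with respect to the order `r`. In particular
`trim (· > ·) k s` is `s` without its `k` largest elements. -/
def trim (k : ℕ) (s : Finset α) : Finset α := {y ∈ s | k ≤ #{x ∈ s | r x y}}

variable {r}

lemma mem_trim : y ∈ trim r k s ↔ y ∈ s ∧ k ≤ #{x ∈ s | r x y} := mem_filter

lemma trim_subset : trim r k s ⊆ s := filter_subset _ _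

lemma trim_mono (h : s ⊆ s') : trim r k s ⊆ trim r k s' := by
  intro y hy
  rw [mem_trim] at hy ⊢
  exact ⟨h hy.1, hy.2.trans (card_le_card (filter_subset_filter _ h))⟩

lemma card_le_card_trim_add [IsStrictTotalOrder α r] : #s ≤ #(trim r k s) + k := by
  classical
  have hinj : Set.InjOn (fun y ↦ #{x ∈ s | r x y}) (s \ trim r k s : Finset α) := by
    have hlt {x y : α} (hx : x ∈ s) (hxy : r x y) : #{w ∈ s | r w x} < #{w ∈ s | r w y} :=
      card_lt_card <| (ssubset_iff_of_subset
        (monotone_filter_right s fun w _ hw ↦ _root_.trans hw hxy)).2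
          ⟨x, by simp [hx, hxy], by simp [irrefl]⟩
    intro x hx y hy h
    rcases trichotomous_of r x y with hxy | rfl | hyx
    · exact absurd h (hlt (mem_sdiff.1 hx).1 hxy).ne
    · rfl
    · exact absurd h (hlt (mem_sdiff.1 hy).1 hyx).ne'
  have hrank : #(s \ trim r k s) ≤ #(range k) := card_le_card_of_injOn _ (fun y hy ↦ by
    obtain ⟨hys, hy⟩ := mem_sdiff.1 hy
    exact mem_coe.2 (mem_range.2 (not_le.1 fun h ↦ hy (mem_trim.2 ⟨hys, h⟩)))) hinj
  rw [card_range, card_sdiff_of_subset trim_subset] at hrank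
  omega

lemma exists_superset_card_eq_of_mem_trim [Std.Irrefl r] {w : α} {n : ℕ} (hs : s ⊆ s')
    (hws : w ∈ s) (hw : w ∈ trim r k s') (hsn : #s ≤ n) (hn : n ≤ k + 1) :
    ∃ e ⊆ s', #e = n ∧ s ⊆ e ∧ ∀ v ∈ e, v ∈ s ∨ r v w := by
  classical
  have hcard : n ≤ #(s ∪ {v ∈ s' | r v w}) :=
    calc n ≤ #{v ∈ s' | r v w} + 1 := hn.trans (Nat.add_le_add_right (mem_trim.1 hw).2 1)
      _ = #(insert w {v ∈ s' | r v w}) := (card_insert_of_notMem (by simp [irrefl])).symm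
      _ ≤ _ := card_le_card (by grind)
  obtain ⟨e, hse, hes, hen⟩ := exists_subsuperset_card_eq subset_union_left hsn hcard
  refine ⟨e, hes.trans (union_subset hs (filter_subset _ _)), hen, hse, fun v hv ↦ ?_⟩
  rcases mem_union.1 (hes hv) with h | h
  · exact .inl h
  · exact .inr (mem_filter.1 h).2

end Trim

section Propagates

variable {α ι : Type*} [LinearOrder α] {P : α → α → α → Prop} {t : ℕ}

/-- Whenever `P` holds at three successive elements of `Y`, it still holds after moving one step up
along `Y`. -/
def Propagates (P : α → α → α → Prop) (Y : Finset α) : Prop :=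
  ∀ x ∈ Y, ∀ y ∈ Y, ∀ z ∈ Y, ∀ w ∈ Y, x < y → y < z → z < w → P x y z → P y z w

/-- `P` holds at all triples of `Y` whose least element lies in `B`. -/
def HoldsFrom (P : α → α → α → Prop) (B Y : Finset α) : Prop :=
  ∀ x ∈ B, ∀ y ∈ Y, ∀ z ∈ Y, x < y → y < z → P x y z

/-- `P` fails at all triples of `Y` whose greatest element lies in `B`. -/
def FailsUpTo (P : α → α → α → Prop) (B Y : Finset α) : Prop :=
  ∀ z ∈ B, ∀ x ∈ Y, ∀ y ∈ Y, x < y → y < z → ¬P x y z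

lemma Propagates.holds_of_holds {Y : Finset α} (hY : Propagates P Y) {p q s x y z : α}
    (hp : p ∈ Y) (hq : q ∈ Y) (hs : s ∈ Y) (hx : x ∈ Y) (hy : y ∈ Y) (hz : z ∈ Y)
    (hpq : p < q) (hqs : q < s) (hsx : s < x) (hxy : x < y) (hyz : y < z) (h : P p q s) :
    P x y z :=
  hY s hs x hx y hy z hz hsx hxy hyz <|
    hY q hq s hs x hx y hy hqs hsx hxy <| hY p hp q hq s hs x hx hpq hqs hsx h

lemma exists_lt_lt_of_mem_trim {A : Finset α} {z : α} (hz : z ∈ trim (· > ·) (t + 3) A) :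
    ∃ a ∈ A, ∃ b ∈ A, z < a ∧ a < b ∧ t + 1 ≤ #{w ∈ A | b < w} := by
  have hcard : t + 3 ≤ #{x ∈ A | x > z} := (mem_trim.1 hz).2
  have htwo : 1 < #(trim (· > ·) (t + 1) {x ∈ A | x > z}) := by
    have := card_le_card_trim_add (r := (· > ·)) (k := t + 1) (s := {x ∈ A | x > z})
    omega
  obtain ⟨a, ha, b, hb, hab⟩ := one_lt_card.1 htwo
  wlog hlt : a < b generalizing a b
  · exact this b hb a ha hab.symm (hab.lt_or_gt.resolve_left hlt)
  have habove := (mem_trim.1 hb).2.trans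
    (card_le_card (filter_subset_filter (· > b) (filter_subset (· > z) A)))
  simp only [mem_trim, mem_filter] at ha hb
  exact ⟨a, ha.1.1, b, hb.1.1, ha.1.2, hlt, habove⟩

-- Either `P` holds at some triple of `A` with many elements of `A` above it, and then everywhere
-- above that triple, or it fails at all triples below two elements of `A`.
lemma exists_holdsFrom_or_failsUpTo {A : Finset α} (hA : 2 * t + 4 ≤ #A) {Y : ι → Finset α}
    (hAY : ∀ j, A ⊆ Y j) (hY : ∀ j, Propagates P (Y j)) :
    ∃ B ⊆ A, t + 1 ≤ #B ∧ ((∀ j, HoldsFrom P B (Y j)) ∨ ∀ j, FailsUpTo P B (Y j)) := by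
  by_cases hP : ∃ p ∈ A, ∃ q ∈ A, ∃ s ∈ A, p < q ∧ q < s ∧ P p q s ∧ t + 1 ≤ #{w ∈ A | s < w}
  · obtain ⟨p, hp, q, hq, s, hs, hpq, hqs, hPpqs, hcard⟩ := hP
    refine ⟨_, filter_subset _ _, hcard, .inl fun j x hx y hy z hz hxy hyz ↦ ?_⟩
    exact (hY j).holds_of_holds (hAY j hp) (hAY j hq) (hAY j hs) (hAY j (mem_filter.1 hx).1) hy hz
      hpq hqs (mem_filter.1 hx).2 hxy hyz hPpqs
  · refine ⟨trim (· > ·) (t + 3) A, trim_subset, ?_,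
      .inr fun j z hz x hx y hy hxy hyz hPxyz ↦ hP ?_⟩
    · have := card_le_card_trim_add (r := (· > ·)) (k := t + 3) (s := A)
      omega
    · obtain ⟨a, ha, b, hb, hza, hab, hcard⟩ := exists_lt_lt_of_mem_trim hz
      have hzA : z ∈ A := trim_subset hz
      have hPyza := hY j x hx y hy z (hAY j hzA) a (hAY j ha) hxy hyz hza hPxyz
      exact ⟨z, hzA, a, ha, b, hb, hza, hab,
        hY j y hy z (hAY j hzA) a (hAY j ha) b (hAY j hb) hyz hza hab hPyza, hcard⟩

lemma exists_embedding_forall_or_forall_not {m : ℕ} (Q : Fin (2 * m) → Prop) :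
    ∃ f : Fin m ↪ Fin (2 * m), (∀ i, Q (f i)) ∨ ∀ i, ¬Q (f i) := by
  classical
  have hsum := card_add_card_compl ({i | Q i} : Finset (Fin (2 * m)))
  rw [Fintype.card_fin] at hsum
  have hembed {s : Finset (Fin (2 * m))} (hs : m ≤ #s) :
      ∃ f : Fin m ↪ Fin (2 * m), ∀ i, f i ∈ s :=
    ⟨(Fin.castLEEmb hs).trans (s.orderEmbOfFin rfl).toEmbedding, fun i ↦ s.orderEmbOfFin_mem rfl _⟩
  rcases le_total m #{i | Q i} with h | h
  · obtain ⟨f, hf⟩ := hembed h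
    exact ⟨f, .inl fun i ↦ (mem_filter.1 (hf i)).2⟩
  · obtain ⟨f, hf⟩ := hembed (s := ({i | Q i} : Finset _)ᶜ) (by omega)
    exact ⟨f, .inr fun i ↦ by simpa using hf i⟩

lemma forall_or_forall_not_of_propagates {m : ℕ} {A : Fin (2 * m) → Finset α}
    (hA : ∀ i, 2 * t + 4 ≤ #(A i)) (hprop : ∀ i j, Propagates P (A i ∪ A j)) :
    ∃ (f : Fin m ↪ Fin (2 * m)) (B : Fin m → Finset α),
      (∀ i, B i ⊆ A (f i)) ∧ (∀ i, t + 1 ≤ #(B i)) ∧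
      ((∀ i j, ∀ x ∈ B i ∪ B j, ∀ y ∈ B i ∪ B j, ∀ z ∈ B i ∪ B j, x < y → y < z → P x y z) ∨
        ∀ i j, ∀ x ∈ B i ∪ B j, ∀ y ∈ B i ∪ B j, ∀ z ∈ B i ∪ B j, x < y → y < z → ¬P x y z) := by
  choose B hBA hBcard hB using fun i ↦
    exists_holdsFrom_or_failsUpTo (hA i) (fun j ↦ subset_union_left (s₂ := A j)) (hprop i)
  obtain ⟨f, hf⟩ := exists_embedding_forall_or_forall_not fun i ↦ ∀ j, HoldsFrom P (B i) (A i ∪ A j)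
  have hsub (i j : Fin m) : B (f i) ∪ B (f j) ⊆ A (f i) ∪ A (f j) :=
    union_subset_union (hBA _) (hBA _)
  refine ⟨f, fun i ↦ B (f i), fun i ↦ hBA _, fun i ↦ hBcard _, hf.imp ?_ ?_⟩
  · intro hfrom i j x hx y hy z hz hxy hyz
    rcases mem_union.1 hx with hxi | hxj
    · exact hfrom i (f j) x hxi y (hsub i j hy) z (hsub i j hz) hxy hyz
    · exact hfrom j (f i) x hxj y (union_comm (A (f i)) _ ▸ hsub i j hy) z
        (union_comm (A (f i)) _ ▸ hsub i j hz) hxy hyz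
  · intro hnot i j x hx y hy z hz hxy hyz
    have hupTo (i : Fin m) := (hB (f i)).resolve_left (hnot i)
    rcases mem_union.1 hz with hzi | hzj
    · exact hupTo i (f j) z hzi x (hsub i j hx) y (hsub i j hy) hxy hyz
    · exact hupTo j (f i) z hzj x (union_comm (A (f i)) _ ▸ hsub i j hx) y
        (union_comm (A (f i)) _ ▸ hsub i j hy) hxy hyz

end Propagates

section StepUp

/-- Whether the top differences increase along the triple `x < y < z`. -/
def ascent (x y z : ℕ) : Bool := decide (topDiff x y < topDiff y z)

/-- The top differences increase along the three least elements of `e`. -/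
def StartsWithAscent (e : Finset ℕ) : Prop :=
  ∃ x ∈ e, ∃ y ∈ e, ∃ z ∈ e, x < y ∧ y < z ∧ (∀ v ∈ e, v = x ∨ v = y ∨ z ≤ v) ∧ ascent x y z

open Classical in
/-- The stepped-up coloring: combs inherit the color of their set of top differences, all other
sets are colored according to the shape of their first three elements. -/
def stepUpColoring {κ : Type*} (χ : Finset ℕ → κ) (col : Bool → κ) (e : Finset ℕ) : κ :=
  if IsComb (· < ·) e ∨ IsComb (· > ·) e then χ (topDiffs e) else col (decide (StartsWithAscent e))

variable {κ : Type*} {χ : Finset ℕ → κ} {col : Bool → κ} {k : ℕ} {e Y : Finset ℕ} {b : Bool}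
  {x y z w : ℕ}

lemma startsWithAscent_iff (hx : x ∈ e) (hy : y ∈ e) (hz : z ∈ e) (hxy : x < y) (hyz : y < z)
    (hmin : ∀ v ∈ e, v = x ∨ v = y ∨ z ≤ v) : StartsWithAscent e ↔ ascent x y z := by
  refine ⟨?_, fun h ↦ ⟨x, hx, y, hy, z, hz, hxy, hyz, hmin, h⟩⟩
  rintro ⟨x', hx', y', hy', z', hz', hxy', hyz', hmin', h⟩
  obtain ⟨rfl, rfl, rfl⟩ : x' = x ∧ y' = y ∧ z' = z := by
    have := hmin x' hx'
    have := hmin y' hy'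
    have := hmin z' hz'
    have := hmin' x hx
    have := hmin' y hy
    have := hmin' z hz
    omega
  exact h

lemma ascent_eq_false_iff (hxy : x < y) (hyz : y < z) :
    ascent x y z = false ↔ topDiff y z < topDiff x y := by
  rw [ascent, decide_eq_false_iff_not, not_lt, (topDiff_ne_topDiff hxy hyz).symm.le_iff_lt]

lemma IsComb.ascent_eq_ascent (he : IsComb (· < ·) e ∨ IsComb (· > ·) e) (hx : x ∈ e) (hy : y ∈ e)
    (hz : z ∈ e) (hw : w ∈ e) (hxy : x < y) (hyz : y < z) (hzw : z < w) :
    ascent x y z = ascent y z w := by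
  rcases he with he | he
  · have hxyz := he x hx y hy z hz hxy hyz
    have hyzw := he y hy z hz w hw hyz hzw
    simp only [ascent, hxyz.not_gt, hyzw.not_gt]
  · have hxyz := he z hz y hy x hx hyz hxy
    have hyzw := he w hw z hz y hy hzw hyz
    rw [topDiff_comm y x, topDiff_comm z y] at hxyz
    rw [topDiff_comm z y, topDiff_comm w z] at hyzw
    simp only [ascent, hxyz, hyzw]

lemma isComb_of_forall_ascent_eq
    (h : ∀ x ∈ Y, ∀ y ∈ Y, ∀ z ∈ Y, x < y → y < z → ascent x y z = b) :
    if b then IsComb (· > ·) Y else IsComb (· < ·) Y := by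
  cases b
  · exact fun x hx y hy z hz hxy hyz ↦
      (ascent_eq_false_iff hxy hyz).1 (h x hx y hy z hz hxy hyz)
  · intro x hx y hy z hz hyx hzy
    rw [topDiff_comm y z, topDiff_comm x y]
    exact of_decide_eq_true (h z hz y hy x hx hzy hyx)

lemma exists_edge_of_mem_trim (hk : 3 ≤ k) (hx : x ∈ Y) (hy : y ∈ Y) (hz : z ∈ Y)
    (hw : w ∈ trim (· > ·) k Y) (hxy : x < y) (hyz : y < z) (hzw : z < w) :
    ∃ e ⊆ Y, #e = k + 1 ∧ {x, y, z, w} ⊆ e ∧ ∀ v ∈ e, v = x ∨ v = y ∨ z ≤ v := by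
  have hlow : {x, y, z, w} ⊆ Y := by
    have := trim_subset hw
    grind
  obtain ⟨e, heY, hek, hsub, hmin⟩ := exists_superset_card_eq_of_mem_trim hlow (by simp) hw
    (card_le_four.trans (by omega)) le_rfl
  refine ⟨e, heY, hek, hsub, fun v hv ↦ ?_⟩
  have hv' := hmin v hv
  simp only [mem_insert, mem_singleton] at hv'
  omega

lemma propagates_ascent_of_isMonoOn (hk : 3 ≤ k) {c : κ} (hb : col b ≠ c)
    (hY : IsMonoOn (stepUpColoring χ col) (k + 1) Y c) :
    Propagates (fun x y z ↦ ascent x y z = b) (trim (· > ·) k Y) := by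
  intro x hx y hy z hz w hw hxy hyz hzw hxyz
  obtain ⟨e, heY, hek, hsub, hmin⟩ := exists_edge_of_mem_trim hk (trim_subset hx) (trim_subset hy)
    (trim_subset hz) hw hxy hyz hzw
  simp only [insert_subset_iff, singleton_subset_iff] at hsub
  obtain ⟨hxe, hye, hze, hwe⟩ := hsub
  have hcomb : IsComb (· < ·) e ∨ IsComb (· > ·) e := by
    by_contra hcomb
    apply hb
    simpa only [stepUpColoring, if_neg hcomb, startsWithAscent_iff hxe hye hze hxy hyz hmin,
      Bool.decide_eq_true, hxyz] using hY e heY hek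
  rw [← hxyz, IsComb.ascent_eq_ascent hcomb hxe hye hze hwe hxy hyz hzw]

lemma NoMonoBlocks.not_forall_isMonoOn_stepUpColoring {M m t : ℕ} (h : NoMonoBlocks χ k M m t)
    {B : Fin m → Finset ℕ} (hB : BlockFamily (2 ^ M) (t + 1) B)
    (hasc : ∀ i j, ∀ x ∈ B i ∪ B j, ∀ y ∈ B i ∪ B j, ∀ z ∈ B i ∪ B j, x < y → y < z →
      ascent x y z = b) (c : κ) :
    ¬ ∀ i j, IsMonoOn (stepUpColoring χ col) (k + 1) (B i ∪ B j) c := by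
  intro hmono
  have hcomb (i j : Fin m) := isComb_of_forall_ascent_eq (hasc i j)
  cases b
  · refine h.not_forall_isMonoOn_of_isComb (r := (· < ·)) hB hcomb c fun i j e he hek ↦ ?_
    rw [← hmono i j e he hek, stepUpColoring, if_pos (.inl (IsComb.mono (hcomb i j) he))]
  · refine h.not_forall_isMonoOn_of_isComb (r := (· > ·)) hB hcomb c fun i j e he hek ↦ ?_
    rw [← hmono i j e he hek, stepUpColoring, if_pos (.inr (IsComb.mono (hcomb i j) he))]

lemma NoMonoBlocks.stepUp {M m t : ℕ} (h : NoMonoBlocks χ k M m t) (hk : 3 ≤ k)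
    (hcol : Function.Injective col) :
    NoMonoBlocks (stepUpColoring χ col) (k + 1) (2 ^ M) (2 * m) (2 * t + 4 + k) := by
  intro A hA c hmono
  obtain ⟨b, hb⟩ : ∃ b, col b ≠ c := by
    by_contra! hall
    exact Bool.false_ne_true (hcol ((hall false).trans (hall true).symm))
  have hcard (i) : 2 * t + 4 ≤ #(trim (· > ·) k (A i)) := by
    have := hA.le_card i
    have := card_le_card_trim_add (r := (· > ·)) (k := k) (s := A i)
    omega
  have hprop (i j) : Propagates (fun x y z ↦ ascent x y z = b)
      (trim (· > ·) k (A i) ∪ trim (· > ·) k (A j)) := by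
    have hsub : trim (· > ·) k (A i) ∪ trim (· > ·) k (A j) ⊆ trim (· > ·) k (A i ∪ A j) :=
      union_subset (trim_mono subset_union_left) (trim_mono subset_union_right)
    exact fun x hx y hy z hz w hw ↦ propagates_ascent_of_isMonoOn hk hb (hmono i j)
      x (hsub hx) y (hsub hy) z (hsub hz) w (hsub hw)
  obtain ⟨f, B, hBA, hBcard, hB⟩ := forall_or_forall_not_of_propagates hcard hprop
  have hBA' (i) : B i ⊆ A (f i) := (hBA i).trans trim_subset
  have hblocks : BlockFamily (2 ^ M) (t + 1) B := hA.of_subset f hBA' hBcard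
  have hmonoB (i j) : IsMonoOn (stepUpColoring χ col) (k + 1) (B i ∪ B j) c :=
    (hmono (f i) (f j)).mono (union_subset_union (hBA' i) (hBA' j))
  rcases hB with hB | hB
  · exact h.not_forall_isMonoOn_stepUpColoring hblocks hB c hmonoB
  · exact h.not_forall_isMonoOn_stepUpColoring hblocks (fun i j x hx y hy z hz hxy hyz ↦
      Bool.eq_not_iff.2 (hB i j x hx y hy z hz hxy hyz)) c hmonoB

end StepUp

/-! ### The base case -/

section Base

lemma card_filter_subset_or_disjoint_mul_le {α : Type*} [DecidableEq α] {V F : Finset α}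
    (hFV : F ⊆ V) : #{R ∈ V.powerset | F ⊆ R ∨ Disjoint F R} * 2 ^ #F ≤ 2 * 2 ^ #V := by
  have hsub : {R ∈ V.powerset | F ⊆ R ∨ Disjoint F R} ⊆ Icc F V ∪ (V \ F).powerset := by
    intro R hR
    obtain ⟨hRV, hFR | hFR⟩ := mem_filter.1 hR
    · exact mem_union_left _ (mem_Icc.2 ⟨hFR, mem_powerset.1 hRV⟩)
    · exact mem_union_right _ (mem_powerset.2 (subset_sdiff.2 ⟨mem_powerset.1 hRV, hFR.symm⟩))
  calc #{R ∈ V.powerset | F ⊆ R ∨ Disjoint F R} * 2 ^ #F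
      ≤ (2 ^ (#V - #F) + 2 ^ (#V - #F)) * 2 ^ #F := by
        refine Nat.mul_le_mul_right _ ((card_le_card hsub).trans ((card_union_le _ _).trans_eq ?_))
        rw [card_Icc_finset hFV, card_powerset, card_sdiff_of_subset hFV]
    _ = 2 * 2 ^ #V := by
        rw [← two_mul, mul_assoc, ← pow_add, Nat.sub_add_cancel (card_le_card hFV)]

lemma exists_forall_not_subset_and_not_disjoint {α : Type*} {𝓕 : Finset (Finset α)} {K : ℕ}
    (hK : ∀ F ∈ 𝓕, K ≤ #F) (h : 2 * #𝓕 < 2 ^ K) :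
    ∃ R : Finset α, ∀ F ∈ 𝓕, ¬F ⊆ R ∧ ¬Disjoint F R := by
  classical
  set V := 𝓕.biUnion id
  let bad (F : Finset α) : Finset (Finset α) := {R ∈ V.powerset | F ⊆ R ∨ Disjoint F R}
  have hbad : #(𝓕.biUnion bad) * 2 ^ K < #V.powerset * 2 ^ K :=
    calc #(𝓕.biUnion bad) * 2 ^ K ≤ ∑ F ∈ 𝓕, #(bad F) * 2 ^ K := by
          rw [← sum_mul]
          exact Nat.mul_le_mul_right _ card_biUnion_le
      _ ≤ #𝓕 * (2 * 2 ^ #V) := sum_le_card_nsmul _ _ _ fun F hF ↦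
          (Nat.mul_le_mul_left _ (Nat.pow_le_pow_right two_pos (hK F hF))).trans
            (card_filter_subset_or_disjoint_mul_le (subset_biUnion_of_mem id hF))
      _ = 2 * #𝓕 * 2 ^ #V := by ring
      _ < 2 ^ K * 2 ^ #V := Nat.mul_lt_mul_of_pos_right h (by positivity)
      _ = #V.powerset * 2 ^ K := by rw [card_powerset, mul_comm]
  obtain ⟨R, hRV, hR⟩ := exists_mem_notMem_of_card_lt_card (Nat.lt_of_mul_lt_mul_right hbad)
  refine ⟨R, fun F hF ↦ not_or.1 fun hFR ↦ hR ?_⟩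
  exact mem_biUnion.2 ⟨F, hF, mem_filter.2 ⟨hRV, hFR⟩⟩

variable {N m : ℕ}

lemma BlockFamily.exists_transversal {T : ℕ} {A : Fin m → Finset ℕ} (hA : BlockFamily T 1 A) :
    ∃ a : Fin m ↪ ℕ, ∀ i, a i ∈ A i := by
  choose a ha using fun i ↦ card_pos.1 (hA.le_card i)
  refine ⟨⟨a, fun i j hij ↦ ?_⟩, ha⟩
  by_contra hne
  exact disjoint_left.1 (hA.disjoint i j hne) (ha i) (hij ▸ ha j)

-- Erdős' lower bound for diagonal graph Ramsey numbers, with a transversal of the blocks as clique.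
lemma exists_noMonoBlocks_two (h : 2 * N.choose m < 2 ^ m.choose 2) :
    ∃ φ : Finset ℕ → Bool, NoMonoBlocks φ 2 N m 1 := by
  obtain ⟨R, hR⟩ := exists_forall_not_subset_and_not_disjoint
    (𝓕 := (powersetCard m (range N)).image (powersetCard 2)) (K := m.choose 2)
    (forall_mem_image.2 fun S hS ↦ by rw [card_powersetCard, (mem_powersetCard.1 hS).2])
    ((Nat.mul_le_mul_left 2 (card_image_le.trans_eq (by simp))).trans_lt h)
  refine ⟨fun e ↦ decide (e ∈ R), fun A hA b hmono ↦ ?_⟩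
  obtain ⟨a, ha⟩ := hA.exists_transversal
  have hpair : ∀ e ∈ powersetCard 2 (univ.map a), decide (e ∈ R) = b := by
    intro e he
    obtain ⟨hesub, hecard⟩ := mem_powersetCard.1 he
    obtain ⟨x, y, hxy, rfl⟩ := card_eq_two.1 hecard
    obtain ⟨i, -, rfl⟩ := mem_map.1 (hesub (mem_insert_self x {y}))
    obtain ⟨j, -, rfl⟩ := mem_map.1 (hesub (mem_insert_of_mem (mem_singleton_self y)))
    refine hmono i j _ (insert_subset (mem_union_left _ (ha i)) ?_) hecard
    exact singleton_subset_iff.2 (mem_union_right _ (ha j))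
  have hclique : univ.map a ∈ powersetCard m (range N) := mem_powersetCard.2
    ⟨map_subset_iff_subset_preimage.2 fun i _ ↦ by simpa using hA.subset_range i (ha i), by simp⟩
  obtain ⟨hsub, hdisj⟩ := hR _ (mem_image_of_mem _ hclique)
  cases b
  · exact hdisj (disjoint_left.2 fun e he ↦ of_decide_eq_false (hpair e he))
  · exact hsub fun e he ↦ of_decide_eq_true (hpair e he)

lemma two_mul_choose_lt_two_pow (p : ℕ) :
    2 * (2 ^ p).choose (4 * (p + 1)) < 2 ^ (4 * (p + 1)).choose 2 := by
  have hchoose : (4 * (p + 1)).choose 2 = (2 * p + 2) * (4 * p + 3) := by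
    rw [Nat.choose_two_right]
    refine Nat.div_eq_of_eq_mul_left two_pos ?_
    rw [show 4 * (p + 1) - 1 = 4 * p + 3 by omega]
    ring
  calc 2 * (2 ^ p).choose (4 * (p + 1)) ≤ 2 * (2 ^ p) ^ (4 * (p + 1)) :=
        Nat.mul_le_mul_left 2 (Nat.choose_le_pow _ _)
    _ = 2 ^ (p * (4 * (p + 1)) + 1) := by rw [← pow_mul, pow_succ, mul_comm]
    _ < 2 ^ (4 * (p + 1)).choose 2 := Nat.pow_lt_pow_right one_lt_two (by rw [hchoose]; nlinarith)

end Base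

/-! ### Iterated stepping up -/

section Tower

variable {x y : ℝ}

lemma twR_add_two (k : ℕ) (x : ℝ) : twR (k + 2) x = (2 : ℝ) ^ twR (k + 1) x := rfl

lemma twR_mono (k : ℕ) (h : x ≤ y) : twR (k + 1) x ≤ twR (k + 1) y := by
  induction k with
  | zero => exact h
  | succ k ih => exact Real.rpow_le_rpow_of_exponent_le one_le_two ih

lemma twR_nonneg (k : ℕ) (hx : 0 ≤ x) : 0 ≤ twR (k + 1) x := by
  cases k with
  | zero => exact hx
  | succ k => exact Real.rpow_nonneg zero_le_two _

lemma two_mul_twR_le_of_twR_add_one_le {k : ℕ} (h : twR (k + 1) x + 1 ≤ twR (k + 1) y) :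
    2 * twR (k + 2) x ≤ twR (k + 2) y := by
  have hpow := Real.rpow_le_rpow_of_exponent_le one_le_two h
  rwa [Real.rpow_add_one two_ne_zero, mul_comm] at hpow

lemma twR_add_one_le (k : ℕ) (hx : 0 ≤ x) : twR (k + 1) x + 1 ≤ twR (k + 1) (x + 1) := by
  induction k with
  | zero => exact le_rfl
  | succ k ih =>
    have hone : 1 ≤ twR (k + 2) x := Real.one_le_rpow one_le_two (twR_nonneg k hx)
    have := two_mul_twR_le_of_twR_add_one_le ih
    linarith

lemma two_mul_twR_le (k : ℕ) (hx : 0 ≤ x) : 2 * twR (k + 2) x ≤ twR (k + 2) (x + 1) :=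
  two_mul_twR_le_of_twR_add_one_le (twR_add_one_le k hx)

lemma natCast_two_pow_eq_twR {k T : ℕ} (h : (T : ℝ) = twR (k + 1) x) :
    ((2 ^ T : ℕ) : ℝ) = twR (k + 2) x := by
  rw [twR_add_two, ← h, Real.rpow_natCast, Nat.cast_pow, Nat.cast_ofNat]

end Tower

lemma exists_noMonoBlocks_of_three_le {k : ℕ} (hk : 3 ≤ k) :
    ∃ t a : ℕ, ∀ p : ℕ, ∃ (T : ℕ) (χ : Finset ℕ → Fin 4),
      (T : ℝ) = twR k p ∧ NoMonoBlocks χ k T (a * (p + 1)) t := by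
  induction k, hk using Nat.le_induction with
  | base =>
    refine ⟨2, 4, fun p ↦ ?_⟩
    obtain ⟨φ, hφ⟩ := exists_noMonoBlocks_two (two_mul_choose_lt_two_pow p)
    let toFin : Bool × Bool ≃ Fin 4 := Fintype.equivFinOfCardEq rfl
    exact ⟨_, _, natCast_two_pow_eq_twR (natCast_two_pow_eq_twR (k := 0) rfl),
      hφ.stepUp_two.comp_injective toFin.injective⟩
  | succ k hk ih =>
    obtain ⟨t, a, ih⟩ := ih
    refine ⟨2 * t + 4 + k, 2 * a, fun p ↦ ?_⟩
    obtain ⟨T, χ, hT, hχ⟩ := ih p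
    let col (b : Bool) : Fin 4 := if b then 1 else 0
    obtain ⟨l, rfl⟩ := Nat.exists_eq_add_of_le' (show 1 ≤ k by omega)
    exact ⟨_, _, natCast_two_pow_eq_twR hT,
      mul_assoc 2 a (p + 1) ▸ hχ.stepUp hk (show Function.Injective col by decide)⟩

-- For graphs, the blow-up needs the color `0` for the pairs inside a single block.
lemma exists_noMonoBlocks {k : ℕ} (hk : 2 ≤ k) :
    ∃ t a : ℕ, ∀ p : ℕ, ∃ (T : ℕ) (χ : Finset ℕ → Fin 4),
      (T : ℝ) = twR k p ∧ NoMonoBlocks χ k T (a * (p + 1)) t ∧ (3 ≤ k ∨ ∀ e, χ e ≠ 0) := by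
  obtain rfl | hk := hk.eq_or_lt
  · refine ⟨1, 4, fun p ↦ ?_⟩
    obtain ⟨φ, hφ⟩ := exists_noMonoBlocks_two (two_mul_choose_lt_two_pow p)
    let col (b : Bool) : Fin 4 := if b then 1 else 2
    have hcol : Function.Injective col ∧ ∀ b, col b ≠ 0 := by decide
    exact ⟨_, _, natCast_two_pow_eq_twR (k := 0) rfl, hφ.comp_injective hcol.1,
      .inr fun _ ↦ hcol.2 _⟩
  · obtain ⟨t, a, h⟩ := exists_noMonoBlocks_of_three_le hk
    refine ⟨t, a, fun p ↦ ?_⟩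
    obtain ⟨T, χ, hT, hχ⟩ := h p
    exact ⟨T, χ, hT, hχ, .inl hk⟩

/-! ### Finiteness of Ramsey numbers -/

section Ramsey

variable {κ : Type*} {k : ℕ}

/-- `N` is an upper bound for the Ramsey number of the complete `k`-uniform hypergraph on `n`
vertices with colors in `κ`. -/
def IsRamseyBound (κ : Type*) (k n N : ℕ) : Prop :=
  ∀ X : Finset ℕ, N ≤ #X → ∀ χ : Finset ℕ → κ, ∃ S ⊆ X, #S = n ∧ ∃ c, IsMonoOn χ k S c

lemma exists_forall_isMonoOn_insert (h : ∀ n, ∃ N, IsRamseyBound κ k n N) (l : ℕ) :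
    ∃ N, ∀ X : Finset ℕ, N ≤ #X → ∀ χ : Finset ℕ → κ, ∃ S ⊆ X, #S = l ∧ ∃ col : ℕ → κ,
      ∀ x ∈ S, IsMonoOn (fun e ↦ χ (insert x e)) k {y ∈ S | x < y} (col x) := by
  induction l with
  | zero => exact ⟨0, fun X _ χ ↦ ⟨∅, empty_subset X, card_empty, fun _ ↦ χ ∅, by simp⟩⟩
  | succ l ih =>
    obtain ⟨N₁, hN₁⟩ := ih
    obtain ⟨N₂, hN₂⟩ := h N₁
    refine ⟨N₂ + 1, fun X hX χ ↦ ?_⟩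
    obtain ⟨a, ha⟩ := exists_minimal (card_pos.1 (by omega : 0 < #X))
    obtain ⟨S₂, hS₂, hS₂card, c, hc⟩ := hN₂ (X.erase a)
      (by rw [card_erase_of_mem ha.prop]; omega) fun e ↦ χ (insert a e)
    obtain ⟨S₁, hS₁, hS₁card, col, hcol⟩ := hN₁ S₂ hS₂card.ge χ
    have hS₁X : S₁ ⊆ X.erase a := hS₁.trans hS₂
    have hlt : ∀ y ∈ S₁, a < y := fun y hy ↦
      (le_of_not_gt (ha.not_lt (mem_of_mem_erase (hS₁X hy)))).lt_of_ne
        (ne_of_mem_erase (hS₁X hy)).symm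
    have haS₁ : a ∉ S₁ := fun haS₁ ↦ lt_irrefl a (hlt a haS₁)
    refine ⟨insert a S₁, insert_subset ha.prop (hS₁X.trans (erase_subset a X)),
      by rw [card_insert_of_notMem haS₁, hS₁card], Function.update col a c, fun x hx ↦ ?_⟩
    rcases mem_insert.1 hx with rfl | hxS₁
    · rw [Function.update_self, filter_insert, if_neg (lt_irrefl x)]
      exact hc.mono ((filter_subset _ _).trans hS₁)
    · rw [Function.update_of_ne (hlt x hxS₁).ne', filter_insert, if_neg (hlt x hxS₁).not_gt]
      exact hcol x hxS₁

theorem exists_isRamseyBound [Finite κ] (k n : ℕ) : ∃ N, IsRamseyBound κ k n N := by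
  classical
  have := Fintype.ofFinite κ
  induction k generalizing n with
  | zero =>
    refine ⟨n, fun X hX χ ↦ ?_⟩
    obtain ⟨S, hS, hSn⟩ := exists_subset_card_eq hX
    exact ⟨S, hS, hSn, χ ∅, fun e _ he ↦ by rw [card_eq_zero.1 he]⟩
  | succ k ih =>
    obtain ⟨N, hN⟩ := exists_forall_isMonoOn_insert ih (Fintype.card κ * n)
    refine ⟨N, fun X hX χ ↦ ?_⟩
    obtain ⟨S, hS, hScard, col, hcol⟩ := hN X hX χ
    obtain ⟨c, -, hc⟩ := exists_le_card_fiber_of_mul_le_card_of_maps_to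
      (fun x _ ↦ mem_univ (col x)) ⟨χ ∅, mem_univ _⟩ (hScard.ge : #univ * n ≤ #S)
    obtain ⟨R, hR, hRn⟩ := exists_subset_card_eq hc
    refine ⟨R, hR.trans ((filter_subset _ _).trans hS), hRn, c, fun e he hek ↦ ?_⟩
    obtain ⟨x, hx⟩ := exists_minimal (card_pos.1 (by omega : 0 < #e))
    obtain ⟨hxS, rfl⟩ := mem_filter.1 (hR (he hx.prop))
    have hrest : e.erase x ⊆ {y ∈ S | x < y} := fun y hy ↦
      mem_filter.2 ⟨(mem_filter.1 (hR (he (mem_of_mem_erase hy)))).1,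
        (le_of_not_gt (hx.not_lt (mem_of_mem_erase hy))).lt_of_ne (ne_of_mem_erase hy).symm⟩
    simpa only [insert_erase hx.prop] using
      hcol x hxS (e.erase x) hrest (by rw [card_erase_of_mem hx.prop, hek, Nat.add_sub_cancel])

lemma exists_arrowsProp {n : ℕ} (q : ℕ) {E : Finset (Finset (Fin n))} (hE : ∀ e ∈ E, #e = k) :
    ∃ N, arrowsProp n N q E := by
  obtain ⟨N, hN⟩ := exists_isRamseyBound (κ := Fin q) k n
  refine ⟨N, fun χ ↦ ?_⟩
  obtain ⟨S, hS, hSn, c, hc⟩ := hN (univ.map (Fin.valEmbedding (n := N))) (by simp)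
    fun e ↦ χ (e.preimage Fin.valEmbedding Fin.valEmbedding.injective.injOn)
  obtain ⟨S, -, rfl⟩ := subset_map_iff.1 hS
  rw [card_map] at hSn
  let f := (S.orderEmbOfFin hSn).toEmbedding
  refine ⟨f, c, fun e he ↦ ?_⟩
  have hfS : e.map f ⊆ S :=
    map_subset_iff_subset_preimage.2 fun i _ ↦ mem_preimage.2 (S.orderEmbOfFin_mem hSn i)
  simpa only [preimage_map] using hc ((e.map f).map Fin.valEmbedding) (map_subset_map.2 hfS)
    (by rw [card_map, card_map, hE e he])

end Ramsey

/-! ### Blowing up -/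

section BlowUp

/-- The elements of `s` with at least `k` elements of `s` on either side. -/
def middle (k : ℕ) (s : Finset ℕ) : Finset ℕ := trim (· < ·) k s ∩ trim (· > ·) k s

lemma middle_mono {k : ℕ} {s s' : Finset ℕ} (h : s ⊆ s') : middle k s ⊆ middle k s' :=
  inter_subset_inter (trim_mono h) (trim_mono h)

lemma middle_subset {k : ℕ} {s : Finset ℕ} : middle k s ⊆ s :=
  inter_subset_left.trans trim_subset

lemma card_le_card_middle_add (k : ℕ) (s : Finset ℕ) : #s ≤ #(middle k s) + 2 * k := by
  have := card_le_card_trim_add (r := (· < ·)) (k := k) (s := s)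
  have := card_le_card_trim_add (r := (· > ·)) (k := k) (s := s)
  have := card_union_add_card_inter (trim (· < ·) k s) (trim (· > ·) k s)
  have := card_le_card (union_subset (trim_subset (r := (· < ·)) (k := k) (s := s))
    (trim_subset (r := (· > ·)) (k := k)))
  rw [middle]
  omega

open Classical in
/-- The blow-up of a coloring `χ` in which `x` is replaced by the block `β ⁻¹' {x}`: sets meeting
each block at most once inherit their color from `χ`. The colors of the other sets distinguish
whether all elements are in the same block (`0`), and otherwise whether the first block is met only
once (`1`) or repeatedly (`2`). -/
def blowUpColoring (β : ℕ → ℕ) (χ : Finset ℕ → Fin 4) (e : Finset ℕ) : Fin 4 :=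
  if Set.InjOn β e then χ (e.image β)
  else if ∀ x ∈ e, ∀ y ∈ e, β x = β y then 0
  else if ∃ x ∈ e, ∃ y ∈ e, x ≠ y ∧ β x = β y ∧ ∀ w ∈ e, β x ≤ β w then 2
  else 1

variable {β : ℕ → ℕ} {χ : Finset ℕ → Fin 4} {k : ℕ} {e Y : Finset ℕ} {c : Fin 4} {y y' z : ℕ}

lemma blowUpColoring_of_injOn (h : Set.InjOn β e) : blowUpColoring β χ e = χ (e.image β) :=
  if_pos h

lemma blowUpColoring_of_const (he : 2 ≤ #e) (h : ∀ x ∈ e, ∀ y ∈ e, β x = β y) :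
    blowUpColoring β χ e = 0 := by
  obtain ⟨x, hx, y, hy, hxy⟩ := one_lt_card.1 he
  rw [blowUpColoring, if_neg fun hinj ↦ hxy (hinj hx hy (h x hx y hy)), if_pos h]

lemma blowUpColoring_of_repeated_min (hy : y ∈ e) (hy' : y' ∈ e) (hz : z ∈ e) (hne : y ≠ y')
    (hyy' : β y = β y') (hyz : β y < β z) (hmin : ∀ w ∈ e, β y ≤ β w) :
    blowUpColoring β χ e = 2 := by
  rw [blowUpColoring, if_neg fun hinj ↦ hne (hinj hy hy' hyy'),
    if_neg fun hconst ↦ hyz.ne (hconst y hy z hz), if_pos ⟨y, hy, y', hy', hne, hyy', hmin⟩]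

lemma blowUpColoring_of_unique_min (hy : y ∈ e) (hy' : y' ∈ e) (hz : z ∈ e) (hne : y ≠ y')
    (hyy' : β y = β y') (hyz : β z < β y) (hmin : ∀ w ∈ e, w = z ∨ β z < β w) :
    blowUpColoring β χ e = 1 := by
  have hunique : ¬∃ x ∈ e, ∃ x' ∈ e, x ≠ x' ∧ β x = β x' ∧ ∀ w ∈ e, β x ≤ β w := by
    rintro ⟨x, hx, x', hx', hxx', heq, hle⟩
    have hxz := (hmin x hx).resolve_right (hle z hz).not_gt
    have hx'z := (hmin x' hx').resolve_right (heq ▸ hle z hz).not_gt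
    exact hxx' (hxz.trans hx'z.symm)
  rw [blowUpColoring, if_neg fun hinj ↦ hne (hinj hy hy' hyy'),
    if_neg fun hconst ↦ hyz.ne (hconst z hz y hy), if_neg hunique]

lemma eq_zero_of_isMonoOn_blowUpColoring (hk : 2 ≤ k) (hY : IsMonoOn (blowUpColoring β χ) k Y c)
    {V : Finset ℕ} (hVY : V ⊆ Y) (hV : k ≤ #V) (hconst : ∀ v ∈ V, β v = β y) : c = 0 := by
  obtain ⟨e, heV, hek⟩ := exists_subset_card_eq hV
  rw [← hY e (heV.trans hVY) hek]
  exact blowUpColoring_of_const (hk.trans_eq hek.symm) fun x hx x' hx' ↦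
    (hconst x (heV hx)).trans (hconst x' (heV hx')).symm

lemma exists_edge_of_mem_trim_of_le (hβ : Monotone β) (hk : 3 ≤ k) (hy : y ∈ Y)
    (hy' : y' ∈ trim (· > ·) k Y) (hz : z ∈ Y) (hyy' : β y = β y') :
    ∃ e ⊆ Y, #e = k ∧ y ∈ e ∧ y' ∈ e ∧ z ∈ e ∧ ∀ w ∈ e, w = z ∨ β y ≤ β w := by
  have hsub : {y, y', z} ⊆ Y := by
    have := trim_subset hy'
    grind
  obtain ⟨e, heY, hek, hsub, hmin⟩ := exists_superset_card_eq_of_mem_trim hsub (by simp) hy'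
    (card_le_three.trans hk) k.le_succ
  refine ⟨e, heY, hek, hsub (by simp), hsub (by simp), hsub (by simp), fun w hw ↦ ?_⟩
  rcases hmin w hw with hw | hw
  · grind
  · exact .inr (hyy'.trans_le (hβ (le_of_lt hw)))

lemma eq_two_of_isMonoOn_blowUpColoring (hβ : Monotone β) (hk : 3 ≤ k)
    (hY : IsMonoOn (blowUpColoring β χ) k Y c) (hy : y ∈ Y) (hy' : y' ∈ trim (· > ·) k Y)
    (hz : z ∈ Y) (hne : y ≠ y') (hyy' : β y = β y') (hyz : β y < β z) : c = 2 := by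
  obtain ⟨e, heY, hek, hye, hy'e, hze, hmin⟩ := exists_edge_of_mem_trim_of_le hβ hk hy hy' hz hyy'
  rw [← hY e heY hek]
  refine blowUpColoring_of_repeated_min hye hy'e hze hne hyy' hyz fun w hw ↦ ?_
  rcases hmin w hw with rfl | h
  · exact hyz.le
  · exact h

lemma eq_one_of_isMonoOn_blowUpColoring (hβ : Monotone β) (hk : 3 ≤ k)
    (hY : IsMonoOn (blowUpColoring β χ) k Y c) (hy : y ∈ Y) (hy' : y' ∈ trim (· > ·) k Y)
    (hz : z ∈ Y) (hne : y ≠ y') (hyy' : β y = β y') (hzy : β z < β y) : c = 1 := by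
  obtain ⟨e, heY, hek, hye, hy'e, hze, hmin⟩ := exists_edge_of_mem_trim_of_le hβ hk hy hy' hz hyy'
  rw [← hY e heY hek]
  exact blowUpColoring_of_unique_min hye hy'e hze hne hyy' hzy fun w hw ↦
    (hmin w hw).imp_right hzy.trans_le

-- Elements in earlier and later blocks than `y` force the colors `1` and `2`, respectively, and if
-- there are none on one side then the `k` elements on that side of `y` force the color `0`.
lemma const_of_isMonoOn_blowUpColoring_of_three_le (hβ : Monotone β) (hk : 3 ≤ k)
    (hY : IsMonoOn (blowUpColoring β χ) k Y c) (hy : y ∈ trim (· < ·) k Y)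
    (hy' : y' ∈ trim (· > ·) k Y) (hlt : y < y') (hyy' : β y = β y') : ∀ z ∈ Y, β z = β y := by
  have hk2 : 2 ≤ k := Nat.le_of_succ_le hk
  have hyY := trim_subset hy
  have hnot_lt : ¬∃ z ∈ Y, β y < β z := by
    rintro ⟨z, hz, hyz⟩
    have htwo := eq_two_of_isMonoOn_blowUpColoring hβ hk hY hyY hy' hz hlt.ne hyy' hyz
    have hge : ∀ w ∈ Y, β y ≤ β w := by
      by_contra! ⟨w, hw, hwy⟩
      have hone := eq_one_of_isMonoOn_blowUpColoring hβ hk hY hyY hy' hw hlt.ne hyy' hwy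
      simp [hone] at htwo
    have hzero := eq_zero_of_isMonoOn_blowUpColoring (y := y) hk2 hY (filter_subset (· < y) Y)
      (mem_trim.1 hy).2 fun v hv ↦
        (hβ (mem_filter.1 hv).2.le).antisymm (hge v (mem_filter.1 hv).1)
    simp [hzero] at htwo
  push Not at hnot_lt
  have hzero := eq_zero_of_isMonoOn_blowUpColoring (y := y) hk2 hY (filter_subset (· > y') Y)
    (mem_trim.1 hy').2 fun v hv ↦
      (hnot_lt v (mem_filter.1 hv).1).antisymm (hβ (hlt.trans (mem_filter.1 hv).2).le)
  intro z hz
  by_contra hne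
  have hone := eq_one_of_isMonoOn_blowUpColoring hβ hk hY hyY hy' hz hlt.ne hyy'
    ((hnot_lt z hz).lt_of_ne hne)
  simp [hzero] at hone

lemma const_of_isMonoOn_blowUpColoring_two (hχ : ∀ e, χ e ≠ 0)
    (hY : IsMonoOn (blowUpColoring β χ) 2 Y c) (hy : y ∈ Y) (hy' : y' ∈ Y) (hne : y ≠ y')
    (hyy' : β y = β y') : ∀ z ∈ Y, β z = β y := by
  intro z hz
  have hzero : c = 0 := eq_zero_of_isMonoOn_blowUpColoring le_rfl hY (y := y)
    (insert_subset hy (singleton_subset_iff.2 hy')) (card_pair hne).ge (by simp [hyy'])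
  by_contra hzy
  have hinj : Set.InjOn β ({z, y} : Finset ℕ) := by
    rw [coe_pair, Set.injOn_pair]
    exact fun h ↦ absurd h hzy
  refine hχ (({z, y} : Finset ℕ).image β) ?_
  rw [← blowUpColoring_of_injOn (χ := χ) hinj, ← hzero]
  exact hY _ (insert_subset hz (singleton_subset_iff.2 hy)) (card_pair (ne_of_apply_ne β hzy))

lemma injOn_middle_or_const (hβ : Monotone β) (hk : 2 ≤ k) (hχ : 3 ≤ k ∨ ∀ e, χ e ≠ 0)
    (hY : IsMonoOn (blowUpColoring β χ) k Y c) :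
    Set.InjOn β (middle k Y) ∨ ∀ x ∈ Y, ∀ y ∈ Y, β x = β y := by
  refine or_iff_not_imp_left.2 fun hinj ↦ ?_
  simp only [Set.InjOn, not_forall, mem_coe] at hinj
  obtain ⟨y, hy, y', hy', hyy', hne⟩ := hinj
  wlog hlt : y < y' generalizing y y'
  · exact this y' hy' y hy hyy'.symm (Ne.symm hne) (by omega)
  suffices hconst : ∀ z ∈ Y, β z = β y from fun x hx z hz ↦ (hconst x hx).trans (hconst z hz).symm
  have hyl := mem_of_mem_inter_left hy
  have hyr := mem_of_mem_inter_right hy'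
  by_cases hk3 : 3 ≤ k
  · exact const_of_isMonoOn_blowUpColoring_of_three_le hβ hk3 hY hyl hyr hlt hyy'
  · obtain rfl : k = 2 := by omega
    exact const_of_isMonoOn_blowUpColoring_two (hχ.resolve_left hk3) hY (trim_subset hyl)
      (trim_subset hyr) hne hyy'

lemma IsMonoOn.image_of_blowUpColoring (hY : IsMonoOn (blowUpColoring β χ) k Y c)
    (hinj : Set.InjOn β Y) : IsMonoOn χ k (Y.image β) c := by
  intro e he hek
  obtain ⟨e', he', rfl⟩ := subset_image_iff.1 he
  have hinj' : Set.InjOn β e' := hinj.mono (coe_subset.2 he')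
  rw [← blowUpColoring_of_injOn (χ := χ) hinj']
  exact hY e' he' (by rwa [card_image_of_injOn hinj'] at hek)

lemma NoMonoBlocks.not_forall_isMonoOn_blowUpColoring {T N m t : ℕ} (h : NoMonoBlocks χ k T m t)
    (hβ : ∀ x < N, β x < T) {A : Fin m → Finset ℕ} (hA : BlockFamily N (t + 2 * k) A)
    (hinj : ∀ i j, Set.InjOn β (middle k (A i ∪ A j))) (c : Fin 4) :
    ¬ ∀ i j, IsMonoOn (blowUpColoring β χ) k (A i ∪ A j) c := by
  intro hmono
  have hsub (i j) : middle k (A i) ∪ middle k (A j) ⊆ middle k (A i ∪ A j) :=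
    union_subset (middle_mono subset_union_left) (middle_mono subset_union_right)
  refine h (fun i ↦ (middle k (A i)).image β) ⟨fun i ↦ ?_, fun i ↦ ?_, fun i j hij ↦ ?_⟩ c
    fun i j ↦ ?_
  · refine image_subset_iff.2 fun x hx ↦ mem_range.2 (hβ x ?_)
    exact mem_range.1 (hA.subset_range i (middle_subset hx))
  · rw [card_image_of_injOn ((hinj i i).mono (middle_mono subset_union_left))]
    have := card_le_card_middle_add k (A i)
    have := hA.le_card i
    omega
  · simp only [disjoint_left, mem_image]
    rintro _ ⟨x, hx, rfl⟩ ⟨y, hy, hxy⟩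
    obtain rfl := hinj i j (hsub i j (mem_union_right _ hy)) (hsub i j (mem_union_left _ hx)) hxy
    exact disjoint_left.1 (hA.disjoint i j hij) (middle_subset hx) (middle_subset hy)
  · rw [← image_union]
    exact ((hmono i j).mono ((hsub i j).trans middle_subset)).image_of_blowUpColoring
      ((hinj i j).mono (hsub i j))

end BlowUp

/-! ### The hypergraph -/

section NearbyWindows

variable {n k g D a b : ℕ}

/-- The window `{a, …, a + g - 1}` of length `g` in `{0, …, n - 1}`. It is cut off at `n - 1` if
`a + g > n`. -/
def window (n g a : ℕ) : Finset (Fin n) := {v | a ≤ (v : ℕ) ∧ (v : ℕ) < a + g}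

lemma mem_window {v : Fin n} : v ∈ window n g a ↔ a ≤ (v : ℕ) ∧ (v : ℕ) < a + g :=
  mem_filter_univ v

lemma map_valEmbedding_window_subset : (window n g a).map Fin.valEmbedding ⊆ Ico a (a + g) := by
  intro x hx
  obtain ⟨v, hv, rfl⟩ := mem_map.1 hx
  exact mem_Ico.2 (mem_window.1 hv)

lemma card_window_le : #(window n g a) ≤ g := by
  simpa using card_le_card (map_valEmbedding_window_subset (n := n) (g := g) (a := a))

lemma card_window (h : a + g ≤ n) : #(window n g a) = g := by
  have hmap : (window n g a).map Fin.valEmbedding = Ico a (a + g) :=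
    map_valEmbedding_window_subset.antisymm fun x hx ↦ by
      obtain ⟨hax, hxg⟩ := mem_Ico.1 hx
      exact mem_map.2 ⟨⟨x, hxg.trans_le h⟩, mem_window.2 ⟨hax, hxg⟩, rfl⟩
  rw [← card_map Fin.valEmbedding, hmap, Nat.card_Ico, Nat.add_sub_cancel_left]

lemma disjoint_window (h : a + g ≤ b) : Disjoint (window n g a) (window n g b) := by
  simp only [disjoint_left, mem_window]
  omega

open Classical in
/-- The edges of the `k`-uniform hypergraph used for the lower bound: the `k`-sets of vertices which
are covered by two windows of length `g` whose starting points are at distance at most `D`. -/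
def nearbyWindowEdges (n k g D : ℕ) : Finset (Finset (Fin n)) :=
  {e | #e = k ∧ ∃ a b, a ≤ b + D ∧ b ≤ a + D ∧ e ⊆ window n g a ∪ window n g b}

lemma mem_nearbyWindowEdges {e : Finset (Fin n)} : e ∈ nearbyWindowEdges n k g D ↔
    #e = k ∧ ∃ a b, a ≤ b + D ∧ b ≤ a + D ∧ e ⊆ window n g a ∪ window n g b := by
  simp [nearbyWindowEdges]

lemma card_filter_mem_nearbyWindowEdges_le (v : Fin n) :
    #{e ∈ nearbyWindowEdges n k g D | v ∈ e} ≤ (g + 1) * ((2 * D + 1) * 2 ^ (2 * g)) := by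
  have hcover : {e ∈ nearbyWindowEdges n k g D | v ∈ e} ⊆
      (Icc (v - g : ℕ) v).biUnion fun a ↦ (Icc (a - D) (a + D)).biUnion fun b ↦
        (window n g a ∪ window n g b).powerset := by
    intro e he
    obtain ⟨he, hve⟩ := mem_filter.1 he
    obtain ⟨-, a, b, hab, hba, hsub⟩ := mem_nearbyWindowEdges.1 he
    simp only [mem_biUnion, mem_powerset, mem_Icc]
    rcases mem_union.1 (hsub hve) with hv | hv
    · rw [mem_window] at hv
      exact ⟨a, by omega, b, by omega, hsub⟩
    · rw [mem_window] at hv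
      exact ⟨b, by omega, a, by omega, by rwa [union_comm]⟩
  have hpowerset (a b : ℕ) : #(window n g a ∪ window n g b).powerset ≤ 2 ^ (2 * g) := by
    rw [card_powerset, two_mul]
    exact Nat.pow_le_pow_right two_pos
      ((card_union_le _ _).trans (add_le_add card_window_le card_window_le))
  have hb (a : ℕ) : #(Icc (a - D) (a + D)) ≤ 2 * D + 1 := by
    rw [Nat.card_Icc]
    omega
  have ha : #(Icc (v - g : ℕ) v) ≤ g + 1 := by
    rw [Nat.card_Icc]
    omega
  exact (card_le_card hcover).trans <|
    (card_biUnion_le_card_mul _ _ _ fun a _ ↦ (card_biUnion_le_card_mul _ _ _ fun b _ ↦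
      hpowerset a b).trans (Nat.mul_le_mul_right _ (hb a))).trans (Nat.mul_le_mul_right _ ha)

variable {κ : Type*} {F : Fin n ↪ ℕ}

lemma isMonoOn_map_windows {χ : Finset ℕ → κ} {c : κ}
    (hF : ∀ e ∈ nearbyWindowEdges n k g D, χ (e.map F) = c) (hab : a ≤ b + D) (hba : b ≤ a + D) :
    IsMonoOn χ k ((window n g a).map F ∪ (window n g b).map F) c := by
  rw [← map_union]
  intro e he hek
  obtain ⟨e', he', rfl⟩ := subset_map_iff.1 he
  exact hF e' (mem_nearbyWindowEdges.2 ⟨by rwa [card_map] at hek, a, b, hab, hba, he'⟩)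

lemma blockFamily_map_window {N m : ℕ} (hF : ∀ v, F v < N) (hmn : m * g ≤ n) :
    BlockFamily N g fun i : Fin m ↦ (window n g (i * g)).map F where
  subset_range i x hx := by
    obtain ⟨v, -, rfl⟩ := mem_map.1 hx
    exact mem_range.2 (hF v)
  le_card i := by
    rw [card_map, card_window]
    calc i * g + g = (i + 1) * g := by ring
      _ ≤ n := (Nat.mul_le_mul_right g i.isLt).trans hmn
  disjoint i j hij := by
    wlog hlt : i < j generalizing i j
    · exact (this j i hij.symm (hij.lt_or_gt.resolve_left hlt)).symm
    refine (disjoint_map F).2 (disjoint_window ?_)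
    calc i * g + g = (i + 1) * g := by ring
      _ ≤ j * g := Nat.mul_le_mul_right g hlt

lemma exists_div_ne {d : ℕ} (hd : 0 < d) (hdn : d < n) (F : Fin n ↪ ℕ) (r : ℕ) :
    ∃ v, F v / d ≠ r := by
  by_contra! h
  have hsub : univ.map F ⊆ Ico (r * d) (r * d + d) := fun x hx ↦ by
    obtain ⟨v, -, rfl⟩ := mem_map.1 hx
    have := (Nat.div_eq_iff hd).1 (h v)
    exact mem_Ico.2 ⟨this.1, by omega⟩
  have hcard := card_le_card hsub
  rw [card_map, card_univ, Fintype.card_fin, Nat.card_Ico, Nat.add_sub_cancel_left] at hcard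
  omega

variable {β : ℕ → ℕ} {χ : Finset ℕ → Fin 4} {c : Fin 4}

lemma eq_on_window_of_eq_on_window (hβ : Monotone β) (hk : 2 ≤ k) (hχ : 3 ≤ k ∨ ∀ e, χ e ≠ 0)
    (hg : 2 + 2 * k ≤ g) (hF : ∀ e ∈ nearbyWindowEdges n k g D, blowUpColoring β χ (e.map F) = c)
    (hab : a ≤ b + D) (hba : b ≤ a + D) (ha : a + g ≤ n) {r : ℕ}
    (h : ∀ v ∈ window n g a, β (F v) = r) : ∀ v ∈ window n g b, β (F v) = r := by
  have htwo : 1 < #(middle k ((window n g a).map F)) := by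
    have := card_le_card_middle_add k ((window n g a).map F)
    rw [card_map, card_window ha] at this
    omega
  obtain ⟨x, hx, y, hy, hxy⟩ := one_lt_card.1 htwo
  have hr : ∀ z ∈ middle k ((window n g a).map F), β z = r := fun z hz ↦ by
    obtain ⟨v, hv, rfl⟩ := mem_map.1 (middle_subset hz)
    exact h v hv
  rcases injOn_middle_or_const hβ hk hχ (isMonoOn_map_windows hF hab hba) with hinj | hconst
  · have hmem {z : ℕ} (hz : z ∈ middle k ((window n g a).map F)) :=
      middle_mono (subset_union_left (s₂ := (window n g b).map F)) hz
    exact absurd (hinj (hmem hx) (hmem hy) ((hr x hx).trans (hr y hy).symm)) hxy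
  · intro v hv
    rw [← hr x hx]
    exact hconst _ (mem_union_right _ (mem_map_of_mem F hv)) _
      (mem_union_left _ (middle_subset hx))

lemma eq_of_eq_on_window (hβ : Monotone β) (hk : 2 ≤ k) (hχ : 3 ≤ k ∨ ∀ e, χ e ≠ 0)
    (hg : 2 + 2 * k ≤ g) (hF : ∀ e ∈ nearbyWindowEdges n k g D, blowUpColoring β χ (e.map F) = c)
    (hD : 1 ≤ D) (haD : a ≤ D) (ha : a + g ≤ n) {r : ℕ} (h : ∀ v ∈ window n g a, β (F v) = r)
    (v : Fin n) : β (F v) = r := by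
  have hwindow (b : ℕ) (hb : b + g ≤ n) : ∀ v ∈ window n g b, β (F v) = r := by
    induction b with
    | zero => exact eq_on_window_of_eq_on_window hβ hk hχ hg hF (by omega) (by omega) ha h
    | succ b ih =>
      exact eq_on_window_of_eq_on_window hβ hk hχ hg hF (by omega) (by omega) (by omega)
        (ih (by omega))
  exact hwindow (min v (n - g)) (by omega) v (mem_window.2 (by omega))

lemma injOn_middle_windows (hβ : Monotone β) (hk : 2 ≤ k) (hχ : 3 ≤ k ∨ ∀ e, χ e ≠ 0)
    (hg : 2 + 2 * k ≤ g) (hF : ∀ e ∈ nearbyWindowEdges n k g D, blowUpColoring β χ (e.map F) = c)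
    (hD : 1 ≤ D) (hconst : ∀ r, ∃ v, β (F v) ≠ r) (haD : a ≤ D) (hbD : b ≤ D) (ha : a + g ≤ n) :
    Set.InjOn β (middle k ((window n g a).map F ∪ (window n g b).map F)) := by
  have hmono := isMonoOn_map_windows (a := a) (b := b) hF (by omega) (by omega)
  refine (injOn_middle_or_const hβ hk hχ hmono).resolve_right fun h ↦ ?_
  have hmem {v : Fin n} (hv : v ∈ window n g a) :
      F v ∈ (window n g a).map F ∪ (window n g b).map F :=
    mem_union_left _ (mem_map_of_mem F hv)
  obtain ⟨v, hv⟩ : (window n g a).Nonempty := card_pos.1 (by rw [card_window ha]; omega)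
  obtain ⟨w, hw⟩ := hconst (β (F v))
  exact hw (eq_of_eq_on_window hβ hk hχ hg hF hD haD ha
    (fun u hu ↦ h _ (hmem hu) _ (hmem hv)) w)

theorem NoMonoBlocks.not_arrowsProp {T N m t : ℕ} (h : NoMonoBlocks χ k T m t) (hk : 2 ≤ k)
    (hχ : 3 ≤ k ∨ ∀ e, χ e ≠ 0) (hg : t + 2 + 2 * k ≤ g) (hmn : m * g ≤ n)
    (hN : N ≤ T * (n - 1)) : ¬ arrowsProp n N 4 (nearbyWindowEdges n k g (m * g)) := by
  intro harrows
  obtain ⟨f, c, hf⟩ := harrows fun e ↦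
    blowUpColoring (· / (n - 1)) χ (e.map Fin.valEmbedding)
  simp only [map_map] at hf
  have hstart (i : Fin m) : i * g + g ≤ m * g :=
    calc i * g + g = (i + 1) * g := by ring
      _ ≤ m * g := Nat.mul_le_mul_right g i.isLt
  have hblock : BlockFamily N (t + 2 * k) fun i : Fin m ↦
      (window n g (i * g)).map (f.trans Fin.valEmbedding) :=
    have hA := blockFamily_map_window (F := f.trans Fin.valEmbedding) (fun v ↦ (f v).isLt) hmn
    ⟨hA.subset_range, fun i ↦ le_trans (by omega) (hA.le_card i), hA.disjoint⟩
  refine h.not_forall_isMonoOn_blowUpColoring (β := (· / (n - 1))) (fun x hx ↦ ?_) hblock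
    (fun i j ↦ ?_) c fun i j ↦ ?_
  · exact Nat.div_lt_of_lt_mul (hx.trans_le (by rwa [mul_comm]))
  · have := hstart i
    have := hstart j
    exact injOn_middle_windows (fun x y ↦ Nat.div_le_div_right) hk hχ (by omega) hf (by omega)
      (exists_div_ne (by omega) (by omega) _) (by omega) (by omega) (by omega)
  · have := hstart i
    have := hstart j
    exact isMonoOn_map_windows hf (by omega) (by omega)

lemma NoMonoBlocks.mul_le_ramseyNumber {T m t : ℕ} (h : NoMonoBlocks χ k T m t) (hk : 2 ≤ k)
    (hχ : 3 ≤ k ∨ ∀ e, χ e ≠ 0) (hg : t + 2 + 2 * k ≤ g) (hmn : m * g ≤ n) :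
    T * (n - 1) ≤ ramseyNumber n 4 (nearbyWindowEdges n k g (m * g)) := by
  by_contra! hlt
  exact h.not_arrowsProp hk hχ hg hmn hlt.le
    (Nat.sInf_mem (exists_arrowsProp 4 fun e he ↦ (mem_nearbyWindowEdges.1 he).1))

end NearbyWindows

lemma exists_twR_mul_le_ramseyNumber {k : ℕ} (hk : 2 ≤ k) :
    ∃ K : ℕ, 0 < K ∧ ∀ p n : ℕ, K * (p + 1) ≤ n → ∃ E : Finset (Finset (Fin n)),
      (∀ e ∈ E, #e = k) ∧ (∀ v, #{e ∈ E | v ∈ e} ≤ K * (p + 1)) ∧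
        twR k p * ((n - 1 : ℕ) : ℝ) ≤ ramseyNumber n 4 E := by
  obtain ⟨t, a, hχ⟩ := exists_noMonoBlocks hk
  set g := t + 2 + 2 * k with hg
  refine ⟨(g + 1) * ((2 * (a * g) + 1) * 2 ^ (2 * g)), by positivity, fun p n hn ↦ ?_⟩
  obtain ⟨T, χ, hT, hχ, hχk⟩ := hχ p
  refine ⟨nearbyWindowEdges n k g (a * (p + 1) * g), fun e he ↦ (mem_nearbyWindowEdges.1 he).1,
    fun v ↦ (card_filter_mem_nearbyWindowEdges_le v).trans ?_, ?_⟩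
  · calc (g + 1) * ((2 * (a * (p + 1) * g) + 1) * 2 ^ (2 * g))
        ≤ (g + 1) * ((2 * (a * (p + 1) * g) + (p + 1)) * 2 ^ (2 * g)) := by gcongr; omega
      _ = (g + 1) * ((2 * (a * g) + 1) * 2 ^ (2 * g)) * (p + 1) := by ring
  · have hmn : a * (p + 1) * g ≤ n :=
      calc a * (p + 1) * g = 1 * (a * g * 1) * (p + 1) := by ring
        _ ≤ (g + 1) * ((2 * (a * g) + 1) * 2 ^ (2 * g)) * (p + 1) := by
          gcongr
          · omega
          · omega
          · exact Nat.one_le_two_pow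
        _ ≤ n := hn
    rw [← hT]
    exact_mod_cast hχ.mul_le_ramseyNumber hk hχk hg.ge hmn

lemma twR_div_mul_le {k K Δ n : ℕ} (hk : 2 ≤ k) (hK : 0 < K) (hΔ : 4 * K ≤ Δ) (hn : 2 ≤ n) :
    twR k (1 / (4 * K) * Δ) * n ≤ twR k ((Δ / K - 1 : ℕ) : ℝ) * ((n - 1 : ℕ) : ℝ) := by
  obtain ⟨k, rfl⟩ := Nat.exists_eq_add_of_le' hk
  have hx : (0 : ℝ) ≤ 1 / (4 * K) * Δ := by positivity
  have hfour : 4 ≤ Δ / K := (Nat.le_div_iff_mul_le hK).2 hΔ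
  have hle : 1 / (4 * K) * Δ + 1 ≤ ((Δ / K - 1 : ℕ) : ℝ) := by
    have hlt : (Δ / K : ℝ) < (Δ / K : ℕ) + 1 := by
      simpa only [Nat.floor_div_eq_div] using Nat.lt_floor_add_one (Δ / K : ℝ)
    have hfour' : (4 : ℝ) ≤ (Δ / K : ℕ) := mod_cast hfour
    have hdiv : 1 / (4 * K) * Δ = (Δ / K : ℝ) / 4 := by field_simp
    rw [Nat.cast_pred (by omega), hdiv]
    linarith
  have hn' : (n : ℝ) ≤ 2 * ((n - 1 : ℕ) : ℝ) := by exact_mod_cast (by omega : n ≤ 2 * (n - 1))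
  calc twR (k + 2) (1 / (4 * K) * Δ) * n
      ≤ twR (k + 2) (1 / (4 * K) * Δ) * (2 * ((n - 1 : ℕ) : ℝ)) := by
        gcongr
        exact twR_nonneg _ hx
    _ = 2 * twR (k + 2) (1 / (4 * K) * Δ) * ((n - 1 : ℕ) : ℝ) := by ring
    _ ≤ twR (k + 2) ((Δ / K - 1 : ℕ) : ℝ) * ((n - 1 : ℕ) : ℝ) := by
        gcongr
        exact (two_mul_twR_le k hx).trans (twR_mono _ hle)

/-- For every `k ≥ 2` there is a constant `c_k > 0` such that for all integers
`Δ ≥ 1/c_k` and `n ≥ Δ`, there exists a `k`-uniform hypergraph on `n` vertices with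
maximum degree at most `Δ` whose `4`-color Ramsey number is at least `tw_k(c_k·Δ)·n`. -/
theorem stmt_0 (k : ℕ) (hk : 2 ≤ k) :
    ∃ c : ℝ, 0 < c ∧ ∀ Δ n : ℕ, 1 / c ≤ (Δ : ℝ) → Δ ≤ n →
      ∃ E : Finset (Finset (Fin n)),
        (∀ e ∈ E, e.card = k) ∧
        (∀ v : Fin n, (E.filter fun e => v ∈ e).card ≤ Δ) ∧
        twR k (c * (Δ : ℝ)) * (n : ℝ) ≤ (ramseyNumber n 4 E : ℝ) := by
  obtain ⟨K, hK, hlower⟩ := exists_twR_mul_le_ramseyNumber hk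
  refine ⟨1 / (4 * K), by positivity, fun Δ n hΔ hn ↦ ?_⟩
  have h4K : 4 * K ≤ Δ := by
    rw [one_div_one_div] at hΔ
    exact_mod_cast hΔ
  have hp : K * (Δ / K - 1 + 1) ≤ Δ := by
    have := (Nat.le_div_iff_mul_le hK).2 h4K
    rw [Nat.sub_add_cancel (by omega)]
    exact Nat.mul_div_le Δ K
  obtain ⟨E, hE, hdeg, hramsey⟩ := hlower (Δ / K - 1) n (hp.trans hn)
  exact ⟨E, hE, fun v ↦ (hdeg v).trans hp,
    (twR_div_mul_le hk hK h4K (by omega)).trans hramsey⟩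
end
end

section
/- Let m be a positive integer, s = ⌊2^{10^{-8}·m}⌋, and let E(K_s) = E_R ∪ E_B be a partition of the edges of the complete graph on {0,…,s−1} having the GRR property for m; let φ be the induced 2-coloring (red/blue) of the 2-element subsets of {0,…,s−1}. Let G ∈ 𝒢_m and set b = |V(G)|/m. Then there is no almost monochromatic embedding of G into φ[b]; that is, there is no map h : V(G) → {0,…,s−1} with |h^{-1}(i)| ≤ b for all i together with a color q ∈ {red, blue} such that every edge uv of G satisfies h(u) = h(v) or φ({h(u), h(v)}) = q. -/
open Finset

attribute [local instance] Classical.propDecidable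

noncomputable section

/-- `sBound m = ⌊2^(10⁻⁸·m)⌋`. -/
def sBound (m : ℕ) : ℕ := ⌊(2 : ℝ) ^ ((m : ℝ) / 10 ^ 8)⌋₊

/-- Membership in the family `𝒢_m`, for a graph with vertex set `Vs` and adjacency
relation `Adj`: for every partition of `Vs` into `s = ⌊2^(10⁻⁸·m)⌋` parts (encoded by a map
`P` into `Fin s`), all of size at most `|Vs|/m`, the sum of `|V_i|·|V_j|` over pairs of parts
joined by at least one edge exceeds `0.55·binom(|Vs|,2)`. -/
def MemGm (m : ℕ) {V : Type*} (Vs : Finset V) (Adj : V → V → Prop) : Prop :=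
  ∀ P : V → Fin (sBound m),
    (∀ i, ((Vs.filter fun v => P v = i).card : ℝ) ≤ (Vs.card : ℝ) / m) →
    0.55 * ((Vs.card : ℝ) * ((Vs.card : ℝ) - 1) / 2) <
      ∑ i : Fin (sBound m), ∑ j : Fin (sBound m),
        if i < j ∧ ∃ u ∈ Vs, ∃ v ∈ Vs, P u = i ∧ P v = j ∧ Adj u v then
          ((Vs.filter fun v => P v = i).card : ℝ) * ((Vs.filter fun v => P v = j).card : ℝ)
        else 0

/-!
Suppose `h` is an almost monochromatic embedding with color `q`, and let `n = |V(G)| = m b`. The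
fiber sizes divided by `b` are weights in `[0, 1]` with total `m`, so by the GRR property the pairs
of color `q` carry weight less than `0.51 · m(m - 1)/2`. Multiplying by `b²`, and using
`b² · m(m - 1) = n(n - b)` and `b ≥ 1`, the pairs of fibers of color `q` contribute less than
`0.51 · binom(n, 2)`. Every pair of fibers joined by an edge has color `q`, while `G ∈ 𝒢_m` makes
the joined pairs contribute more than `0.55 · binom(n, 2)`.
-/

section PairWeight

variable {ι κ : Type*} [Fintype ι] [LinearOrder ι]

/-- The total weight `∑ w i * w j` of the two-element subsets `{i, j}` that satisfy `R`. Each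
subset is represented by its increasing enumeration `i < j`, so `R` is only read at such pairs. -/
def pairWeight (R : ι → ι → Prop) (w : ι → ℝ) : ℝ :=
  ∑ i, ∑ j, if i < j ∧ R i j then w i * w j else 0

theorem pairWeight_mono {R S : ι → ι → Prop} {w : ι → ℝ} (hw : ∀ i, 0 ≤ w i)
    (hRS : ∀ i j, i < j → R i j → S i j) : pairWeight R w ≤ pairWeight S w := by
  refine sum_le_sum fun i _ => sum_le_sum fun j _ => ?_
  have hij : 0 ≤ w i * w j := mul_nonneg (hw i) (hw j)
  by_cases hR : i < j ∧ R i j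
  · rw [if_pos hR, if_pos ⟨hR.1, hRS i j hR.1 hR.2⟩]
  · rw [if_neg hR]
    split_ifs
    · exact hij
    · exact le_rfl

theorem pairWeight_div (R : ι → ι → Prop) (w : ι → ℝ) (b : ℝ) :
    pairWeight R (fun i => w i / b) = pairWeight R w / b ^ 2 := by
  simp only [pairWeight, sum_div, ite_div, zero_div, div_mul_div_comm, sq]

/-- The GRR property for `m` of a coloring `c` of the edges of the complete graph on `ι`. The edge
`{i, j}` with `i < j` has color `c i j`. -/
def HasGRR (m : ℝ) (c : ι → ι → κ) : Prop :=
  ∀ w : ι → ℝ, (∀ i, w i ∈ Set.Icc (0 : ℝ) 1) → m ≤ ∑ i, w i → ∀ q : κ,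
    pairWeight (fun i j => c i j = q) w < 0.51 * ((∑ i, w i) * ((∑ i, w i) - 1) / 2)

theorem HasGRR.pairWeight_lt {m b : ℝ} {c : ι → ι → κ} (hc : HasGRR m c) (hb : 0 < b)
    {w : ι → ℝ} (hw : ∀ i, w i ∈ Set.Icc 0 b) (hsum : m * b ≤ ∑ i, w i) (q : κ) :
    pairWeight (fun i j => c i j = q) w < 0.51 * ((∑ i, w i) * ((∑ i, w i) - b) / 2) := by
  have hunit : ∀ i, w i / b ∈ Set.Icc (0 : ℝ) 1 := fun i =>
    ⟨div_nonneg (hw i).1 hb.le, div_le_one_of_le₀ (hw i).2 hb.le⟩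
  have htotal : m ≤ ∑ i, w i / b := by rwa [← sum_div, le_div_iff₀ hb]
  have hscaled := hc _ hunit htotal q
  rw [pairWeight_div, ← sum_div, div_lt_iff₀ (by positivity)] at hscaled
  calc pairWeight (fun i j => c i j = q) w
      < 0.51 * ((∑ i, w i) / b * ((∑ i, w i) / b - 1) / 2) * b ^ 2 := hscaled
    _ = 0.51 * ((∑ i, w i) * ((∑ i, w i) - b) / 2) := by field_simp

end PairWeight

section Parts

variable {V ι κ : Type*} {Vs : Finset V} {Adj : V → V → Prop} {c : ι → ι → κ} {b : ℝ}
  {h : V → ι} {q : κ}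

/-- The size `|V_i|` of the `i`-th part of the partition of `Vs` into the fibers of `P`. -/
def partSize (Vs : Finset V) (P : V → ι) (i : ι) : ℝ := (Vs.filter fun v => P v = i).card

-- `partSize` decides `P v = i` classically; this allows any other instance, such as that of `Fin`.
theorem partSize_eq_card_filter [DecidableEq ι] (Vs : Finset V) (P : V → ι) (i : ι) :
    partSize Vs P i = (Vs.filter fun v => P v = i).card := by
  unfold partSize
  congr!

theorem partSize_nonneg (Vs : Finset V) (P : V → ι) (i : ι) : 0 ≤ partSize Vs P i :=
  Nat.cast_nonneg _

theorem sum_partSize [Fintype ι] (Vs : Finset V) (P : V → ι) :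
    ∑ i, partSize Vs P i = Vs.card := by
  simp only [partSize]
  exact_mod_cast (card_eq_sum_card_fiberwise fun v _ => mem_univ (P v)).symm

theorem one_le_of_partSize_le (hVs : Vs.Nonempty) (hb : ∀ i, partSize Vs h i ≤ b) : 1 ≤ b := by
  obtain ⟨v, hv⟩ := hVs
  have hpart : (Vs.filter fun u => h u = h v).Nonempty := ⟨v, mem_filter.2 ⟨hv, rfl⟩⟩
  exact le_trans (Nat.one_le_cast.2 hpart.card_pos) (hb (h v))

/-- `h` is an almost monochromatic embedding of the graph `(Vs, Adj)` into the `b`-blowup of the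
coloring `c`, with color `q`: its fibers have size at most `b`, and every edge is collapsed or sent
to an edge of color `q`. -/
structure IsAlmostMonoEmbedding (Vs : Finset V) (Adj : V → V → Prop) (c : ι → ι → κ) (b : ℝ)
    (h : V → ι) (q : κ) : Prop where
  partSize_le : ∀ i, partSize Vs h i ≤ b
  eq_or_color_eq : ∀ u ∈ Vs, ∀ v ∈ Vs, Adj u v → h u = h v ∨ c (h u) (h v) = q

/-- The parts `V_i` and `V_j` of the partition of `Vs` into the fibers of `P` are joined by an
edge. -/
def PartsJoined (Vs : Finset V) (Adj : V → V → Prop) (P : V → ι) (i j : ι) : Prop :=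
  ∃ u ∈ Vs, ∃ v ∈ Vs, P u = i ∧ P v = j ∧ Adj u v

theorem IsAlmostMonoEmbedding.color_eq_of_partsJoined
    (hh : IsAlmostMonoEmbedding Vs Adj c b h q) {i j : ι} (hij : i ≠ j)
    (hjoin : PartsJoined Vs Adj h i j) : c i j = q := by
  obtain ⟨u, hu, v, hv, rfl, rfl, huv⟩ := hjoin
  exact (hh.eq_or_color_eq u hu v hv huv).resolve_left hij

theorem HasGRR.pairWeight_partsJoined_lt [Fintype ι] [LinearOrder ι] {m : ℝ} (hc : HasGRR m c)
    (hh : IsAlmostMonoEmbedding Vs Adj c b h q) (hVs : Vs.Nonempty) (hmb : m * b ≤ Vs.card) :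
    pairWeight (PartsJoined Vs Adj h) (partSize Vs h) <
      0.51 * ((Vs.card : ℝ) * ((Vs.card : ℝ) - 1) / 2) := by
  have hb : 1 ≤ b := one_le_of_partSize_le hVs hh.partSize_le
  have hsum := sum_partSize Vs h
  calc pairWeight (PartsJoined Vs Adj h) (partSize Vs h)
      ≤ pairWeight (fun i j => c i j = q) (partSize Vs h) :=
        pairWeight_mono (partSize_nonneg Vs h) fun _ _ hij => hh.color_eq_of_partsJoined hij.ne
    _ < 0.51 * ((Vs.card : ℝ) * ((Vs.card : ℝ) - b) / 2) := by
        rw [← hsum] at hmb ⊢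
        exact hc.pairWeight_lt (zero_lt_one.trans_le hb)
          (fun i => ⟨partSize_nonneg Vs h i, hh.partSize_le i⟩) hmb q
    _ ≤ 0.51 * ((Vs.card : ℝ) * ((Vs.card : ℝ) - 1) / 2) := by gcongr

end Parts

section MemGm

variable {V κ : Type*} {m : ℕ} {Vs : Finset V} {Adj : V → V → Prop}

theorem MemGm.lt_pairWeight_partsJoined (hG : MemGm m Vs Adj) {P : V → Fin (sBound m)}
    (hP : ∀ i, partSize Vs P i ≤ (Vs.card : ℝ) / m) :
    0.55 * ((Vs.card : ℝ) * ((Vs.card : ℝ) - 1) / 2) <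
      pairWeight (PartsJoined Vs Adj P) (partSize Vs P) := by
  simp only [partSize_eq_card_filter] at hP
  refine (hG P hP).trans_eq (sum_congr rfl fun i _ => sum_congr rfl fun j _ => ?_)
  simp only [partSize_eq_card_filter]
  congr!

theorem MemGm.nonempty (hG : MemGm m Vs Adj) {P : V → Fin (sBound m)}
    (hP : ∀ i, partSize Vs P i ≤ (Vs.card : ℝ) / m) : Vs.Nonempty := by
  by_contra hVs
  obtain rfl := not_nonempty_iff_eq_empty.1 hVs
  simpa [pairWeight, partSize] using hG.lt_pairWeight_partsJoined hP

theorem stmt_8_general (hm : 0 < m) {c : Fin (sBound m) → Fin (sBound m) → κ}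
    (hc : HasGRR m c) (hG : MemGm m Vs Adj) :
    ¬ ∃ h q, IsAlmostMonoEmbedding Vs Adj c ((Vs.card : ℝ) / m) h q := by
  rintro ⟨h, q, hh⟩
  have hVs : Vs.Nonempty := hG.nonempty hh.partSize_le
  have hlower := hG.lt_pairWeight_partsJoined hh.partSize_le
  have hupper := hc.pairWeight_partsJoined_lt hh hVs (mul_div_cancel₀ _ (by positivity)).le
  have hcard : (1 : ℝ) ≤ Vs.card := Nat.one_le_cast.2 hVs.card_pos
  have hchoose : (0 : ℝ) ≤ (Vs.card : ℝ) * ((Vs.card : ℝ) - 1) / 2 := by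
    have := sub_nonneg.2 hcard
    positivity
  linarith

end MemGm

/-- Let `s = ⌊2^(10⁻⁸·m)⌋`, let `c` be a partition of the edges of `K_s` with the GRR
property for `m`, let `G ∈ 𝒢_m` and `b = |V(G)|/m`.  Then there is no almost monochromatic
embedding of `G` into `φ[b]`: no map `h : V(G) → {0,…,s−1}` with all fibers of size at most
`b` together with a color `q` such that every edge `uv` of `G` satisfies `h(u) = h(v)` or
`c (h u) (h v) = q`. -/
theorem stmt_8 (m : ℕ) (hm : 0 < m) (n : ℕ)
    (c : Fin (sBound m) → Fin (sBound m) → Bool) (hsym : ∀ i j, c i j = c j i)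
    (hGRR : ∀ w : Fin (sBound m) → ℝ, (∀ i, w i ∈ Set.Icc (0 : ℝ) 1) →
      (m : ℝ) ≤ ∑ i, w i → ∀ col : Bool,
        (∑ i, ∑ j, if i < j ∧ c i j = col then w i * w j else 0)
          < 0.51 * ((∑ i, w i) * ((∑ i, w i) - 1) / 2))
    (G : SimpleGraph (Fin n)) (hG : MemGm m Finset.univ G.Adj) :
    ¬ ∃ h : Fin n → Fin (sBound m),
        (∀ i, ((Finset.univ.filter fun v => h v = i).card : ℝ) ≤ (n : ℝ) / m) ∧
        ∃ q : Bool, ∀ u v, G.Adj u v → h u = h v ∨ c (h u) (h v) = q := by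
  rintro ⟨h, hb, q, hq⟩
  refine stmt_8_general hm (fun w hw hx col => ?_) hG ⟨h, q, fun i => ?_, fun u _ v _ => hq u v⟩
  · simp only [pairWeight]
    convert hGRR w hw hx col
  · simpa only [partSize_eq_card_filter, card_univ, Fintype.card_fin] using hb i
end
end

section
/- Let k ≥ 3 be an integer, α ∈ (0,1], and set C = (16/α)^{5k}. Then for any integers m ≥ 10^9 and n with n ≥ C·m and α·n/2 ≥ 2^m, there exists an n-vertex k-uniform hypergraph that is (α, m)-good and has maximum degree at most C·m. -/
open Finset

attribute [local instance] Classical.propDecidable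

noncomputable section

/-- The adjacency relation of the graph `H(U; W_1, …, W_r)` (on vertex set `U`):
`u ≠ v` are adjacent if there are `w_i ∈ W_i` with `{u,v} ∪ {w_1,…,w_r} ∈ E`. -/
def hAdj {V : Type*} [DecidableEq V] {r : ℕ} (E : Finset (Finset V)) (W : Fin r → Finset V)
    (u v : V) : Prop :=
  u ≠ v ∧ ∃ w : Fin r → V, (∀ i, w i ∈ W i) ∧
    (({u, v} : Finset V) ∪ Finset.image w Finset.univ) ∈ E

/-- A `k`-uniform hypergraph with vertex set `Vs` and edge set `E` is `(α, m)`-good if for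
all pairwise disjoint `U, W_1, …, W_{k−2} ⊆ Vs` of size at least `α·|Vs|`, the graph
`H(U; W_1, …, W_{k−2})` is in `𝒢_m`. -/
def IsGood (k m : ℕ) (α : ℝ) {V : Type*} [DecidableEq V] (Vs : Finset V)
    (E : Finset (Finset V)) : Prop :=
  ∀ (U : Finset V) (W : Fin (k - 2) → Finset V),
    U ⊆ Vs → (∀ i, W i ⊆ Vs) →
    (∀ i, Disjoint U (W i)) → (∀ i j, i ≠ j → Disjoint (W i) (W j)) →
    α * (Vs.card : ℝ) ≤ (U.card : ℝ) → (∀ i, α * (Vs.card : ℝ) ≤ ((W i).card : ℝ)) →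
    MemGm m U (hAdj E W)

/-!
The hypergraph comes from a random sequence of `O_{α,k}(n m)` tuples `((x, y), w)`, each giving
the edge `{x, y} ∪ {w_1, …, w_{k-2}}`.

If a partition of `U` witnesses that `H(U; W_1, …, W_{k-2})` is not in `𝒢_m`, then, as its classes
are small, at least `0.2 |U|²` pairs of `U` lie in pairs of classes that span no edge. This is a
box of tuples of density bounded below, and no tuple of it may be an edge of `H`. There are at most
`2 ^ (n (m + k))` boxes, because the number `s` of classes satisfies `s ≤ 2 ^ m` and `s² ≤ n`, so
by the union bound some sequence of tuples meets all the dense ones.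

Few vertices have degree above `C m`, by double counting. A box stays dense when they are removed
from `U` and the `W_i`, so all edges through them can be deleted.
-/

section RandomSequences

variable {ι T : Type*} [Fintype ι] [Fintype T]

theorem card_seq_avoiding_le (G : Finset T) (M : ℕ) {δ : ℝ} (hG : δ * Fintype.card T ≤ #G) :
    (#{f : Fin M → T | ∀ q, f q ∉ G} : ℝ) ≤ Fintype.card T ^ M * Real.exp (-(δ * M)) := by
  have avoiding_eq : ({f : Fin M → T | ∀ q, f q ∉ G} : Finset (Fin M → T)) =
      Fintype.piFinset fun _ => Gᶜ := by
    ext f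
    simp
  have card_compl_le : (#Gᶜ : ℝ) ≤ Fintype.card T * Real.exp (-δ) := by
    rw [card_compl, Nat.cast_sub (card_le_univ G)]
    nlinarith [Real.one_sub_le_exp_neg δ]
  calc (#{f : Fin M → T | ∀ q, f q ∉ G} : ℝ) = (#Gᶜ : ℝ) ^ M := by
        rw [avoiding_eq, Fintype.card_piFinset_const, Nat.cast_pow]
    _ ≤ (Fintype.card T * Real.exp (-δ)) ^ M := by gcongr
    _ = Fintype.card T ^ M * Real.exp (-(δ * M)) := by
        rw [mul_pow, ← Real.exp_nat_mul, mul_neg, mul_comm (M : ℝ)]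

theorem exists_seq_hitting_dense_sets [Nonempty T] (G : ι → Finset T) (M : ℕ) (δ : ℝ)
    (hcard : (Fintype.card ι : ℝ) < Real.exp (δ * M)) :
    ∃ f : Fin M → T, ∀ i, δ * Fintype.card T ≤ #(G i) → ∃ q, f q ∈ G i := by
  by_contra! hmiss
  let avoiding (i : ι) : Finset (Fin M → T) := {f | ∀ q, f q ∉ G i}
  let dense : Finset ι := {i | δ * Fintype.card T ≤ #(G i)}
  have cover : univ ⊆ dense.biUnion avoiding := fun f _ => by
    simpa [dense, avoiding] using hmiss f
  refine lt_irrefl ((Fintype.card T : ℝ) ^ M) <| calc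
    (Fintype.card T : ℝ) ^ M = #(univ : Finset (Fin M → T)) := by simp
    _ ≤ ∑ i ∈ dense, (#(avoiding i) : ℝ) := by
        exact_mod_cast (card_le_card cover).trans card_biUnion_le
    _ ≤ ∑ _i ∈ dense, Fintype.card T ^ M * Real.exp (-(δ * M)) :=
        sum_le_sum fun i hi => card_seq_avoiding_le (G i) M (mem_filter.1 hi).2
    _ ≤ Fintype.card ι * (Fintype.card T ^ M * Real.exp (-(δ * M))) := by
        rw [sum_const, nsmul_eq_mul]
        gcongr
        exact card_le_univ dense
    _ < Real.exp (δ * M) * (Fintype.card T ^ M * Real.exp (-(δ * M))) := by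
        have := Fintype.card_pos (α := T)
        gcongr
    _ = Fintype.card T ^ M := by
        rw [Real.exp_neg]
        field_simp

end RandomSequences

section Pruning

variable {ι V : Type*} [Fintype ι] [Fintype V] [DecidableEq V]

/-- The vertices lying in more than `L` members of the sequence `e`, counted with repetition. -/
def heavyVertices (e : ι → Finset V) (L : ℝ) : Finset V :=
  {v | L < #{q | v ∈ e q}}

/-- The `k`-uniform hypergraph formed by the `k`-element members of the sequence `e` that avoid
the vertices of degree more than `L`; members occurring repeatedly are merged. -/
def prunedEdges (e : ι → Finset V) (k : ℕ) (L : ℝ) : Finset (Finset V) :=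
  {s ∈ univ.image e | #s = k ∧ Disjoint s (heavyVertices e L)}

theorem card_heavyVertices_mul_le (e : ι → Finset V) (L : ℝ) {k : ℕ} (he : ∀ q, #(e q) ≤ k) :
    #(heavyVertices e L) * L ≤ k * Fintype.card ι := by
  calc #(heavyVertices e L) * L = #(heavyVertices e L) • L := (nsmul_eq_mul _ _).symm
    _ ≤ ∑ v ∈ heavyVertices e L, (#{q | v ∈ e q} : ℝ) :=
        card_nsmul_le_sum _ _ _ fun v hv => (mem_filter.1 hv).2.le
    _ ≤ ∑ v, (#{q | v ∈ e q} : ℝ) :=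
        sum_le_univ_sum_of_nonneg fun v => by positivity
    _ = ∑ q, (#(e q) : ℝ) := by
        have := sum_card_bipartiteAbove_eq_sum_card_bipartiteBelow (s := univ) (t := univ)
          fun v q => v ∈ e q
        simp only [bipartiteAbove, bipartiteBelow, filter_univ_mem] at this
        exact_mod_cast this
    _ ≤ ∑ _q : ι, (k : ℝ) := sum_le_sum fun q _ => by exact_mod_cast he q
    _ = k * Fintype.card ι := by simp [mul_comm]

theorem degree_prunedEdges_le (e : ι → Finset V) (k : ℕ) {L : ℝ} (hL : 0 ≤ L) (v : V) :
    (#{s ∈ prunedEdges e k L | v ∈ s} : ℝ) ≤ L := by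
  by_cases hv : v ∈ heavyVertices e L
  · have : {s ∈ prunedEdges e k L | v ∈ s} = ∅ := filter_eq_empty_iff.2 fun s hs hvs =>
      disjoint_left.1 (mem_filter.1 hs).2.2 hvs hv
    simpa [this] using hL
  · have hsub : {s ∈ prunedEdges e k L | v ∈ s} ⊆ ({q | v ∈ e q} : Finset ι).image e := by
      intro s hs
      simp only [prunedEdges, mem_filter, mem_image, mem_univ, true_and] at hs ⊢
      obtain ⟨⟨⟨q, rfl⟩, -⟩, hvs⟩ := hs
      exact ⟨q, hvs, rfl⟩
    have hlight : (#{q | v ∈ e q} : ℝ) ≤ L := by simpa [heavyVertices] using hv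
    exact le_trans (by exact_mod_cast (card_le_card hsub).trans card_image_le) hlight

end Pruning

section ClassPairs

variable {V κ : Type*}

/-- The ordered pairs of points of `U` whose classes under the partition `P` are `R`-related.
They count the weights `|V_i||V_j|` of the `R`-related pairs of classes. -/
def classPairs (P : V → κ) (R : κ → κ → Prop) (U : Finset V) : Finset (V × V) :=
  {p ∈ U ×ˢ U | R (P p.1) (P p.2)}

theorem card_classPairs [Fintype κ] [DecidableEq κ] (P : V → κ) (R : κ → κ → Prop) (U : Finset V) :
    #(classPairs P R U) =
      ∑ i, ∑ j, if R i j then #{v ∈ U | P v = i} * #{v ∈ U | P v = j} else 0 := by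
  have fiber (i j : κ) : #{p ∈ classPairs P R U | (P p.1, P p.2) = (i, j)} =
      if R i j then #{v ∈ U | P v = i} * #{v ∈ U | P v = j} else 0 := by
    rw [← card_product, ← filter_product, classPairs, filter_filter]
    split_ifs with hR
    · congr 1
      refine filter_congr fun p _ => ?_
      simp only [Prod.mk.injEq, and_iff_right_iff_imp]
      rintro ⟨rfl, rfl⟩
      exact hR
    · rw [card_eq_zero, filter_eq_empty_iff]
      rintro p - ⟨hp, hij⟩
      simp only [Prod.mk.injEq] at hij
      exact hR (hij.1 ▸ hij.2 ▸ hp)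
  rw [card_eq_sum_card_fiberwise (t := univ) (f := fun p => (P p.1, P p.2)) fun _ _ => by simp,
    Fintype.sum_prod_type]
  simp_rw [fiber]

theorem card_classPairs_eq_le [DecidableEq κ] (P : V → κ) (U : Finset V) {t : ℝ}
    (hP : ∀ i, (#{v ∈ U | P v = i} : ℝ) ≤ t) : #(classPairs P (· = ·) U) ≤ #U * t := by
  have : #(classPairs P (· = ·) U) = ∑ u ∈ U, #{v ∈ U | P v = P u} := by
    simp only [classPairs, card_filter, sum_product, eq_comm]
  rw [this, Nat.cast_sum, ← nsmul_eq_mul]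
  exact sum_le_card_nsmul _ _ _ fun u _ => hP (P u)

theorem two_mul_card_classPairs_lt_add [LinearOrder κ] (P : V → κ) (U : Finset V) :
    2 * #(classPairs P (· < ·) U) + #(classPairs P (· = ·) U) = #U ^ 2 := by
  have swap : #(classPairs P (· > ·) U) = #(classPairs P (· < ·) U) :=
    card_nbij' Prod.swap Prod.swap (by simp [classPairs, Set.MapsTo, and_comm])
      (by simp [classPairs, Set.MapsTo, and_comm]) (fun _ _ => rfl) (fun _ _ => rfl)
  have trichotomy : #U ^ 2 = #(classPairs P (· < ·) U) + #(classPairs P (· = ·) U) +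
      #(classPairs P (· > ·) U) := by
    simp only [classPairs, sq, ← card_product, card_filter, ← sum_add_distrib]
    rw [card_eq_sum_ones]
    refine sum_congr rfl fun p _ => ?_
    rcases lt_trichotomy (P p.1) (P p.2) with h | h | h <;>
      simp [h, ne_of_lt, ne_of_gt, not_lt_of_gt]
  omega

theorem card_classPairs_and_add_and_not (P : V → κ) (R A : κ → κ → Prop) (U : Finset V) :
    #(classPairs P (fun i j => R i j ∧ A i j) U) +
        #(classPairs P (fun i j => R i j ∧ ¬ A i j) U) = #(classPairs P R U) := by
  simp only [classPairs, ← filter_filter]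
  exact card_filter_add_card_filter_not _

theorem card_classPairs_le_sdiff [DecidableEq V] (P : V → κ) (R : κ → κ → Prop) (U B : Finset V) :
    #(classPairs P R U) ≤ #(classPairs P R (U \ B)) + 2 * #U * #B := by
  have hsub : classPairs P R U ⊆ classPairs P R (U \ B) ∪ (U ×ˢ B ∪ B ×ˢ U) := by
    intro p hp
    simp only [classPairs, mem_filter, mem_product, mem_union, mem_sdiff] at hp ⊢
    tauto
  calc #(classPairs P R U) ≤ #(classPairs P R (U \ B)) + (#(U ×ˢ B) + #(B ×ˢ U)) :=
        (card_le_card hsub).trans <| (card_union_le _ _).trans <| by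
          gcongr
          exact card_union_le _ _
    _ = #(classPairs P R (U \ B)) + 2 * #U * #B := by
        simp only [card_product]
        ring

theorem le_card_classPairs_lt_and_not [LinearOrder κ] (P : V → κ) (U : Finset V)
    (A : κ → κ → Prop) {m : ℕ} (hm : 20 ≤ m) (hP : ∀ i, (#{v ∈ U | P v = i} : ℝ) ≤ #U / m)
    (hA : (#(classPairs P (fun i j => i < j ∧ A i j) U) : ℝ) ≤ 0.55 * (#U * (#U - 1) / 2)) :
    0.2 * (#U : ℝ) ^ 2 ≤ #(classPairs P (fun i j => i < j ∧ ¬ A i j) U) := by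
  have hlt : 2 * (#(classPairs P (· < ·) U) : ℝ) + #(classPairs P (· = ·) U) = #U ^ 2 := by
    exact_mod_cast two_mul_card_classPairs_lt_add P U
  have hsplit : (#(classPairs P (fun i j => i < j ∧ A i j) U) : ℝ) +
      #(classPairs P (fun i j => i < j ∧ ¬ A i j) U) = #(classPairs P (· < ·) U) := by
    exact_mod_cast card_classPairs_and_add_and_not P (· < ·) A U
  have hdiag : (#(classPairs P (· = ·) U) : ℝ) ≤ 0.05 * #U ^ 2 := by
    have hm' : (20 : ℝ) ≤ m := by exact_mod_cast hm
    calc (#(classPairs P (· = ·) U) : ℝ) ≤ #U * (#U / m) := card_classPairs_eq_le P U hP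
      _ ≤ #U * (#U / 20) := by gcongr
      _ = 0.05 * #U ^ 2 := by ring
  linarith [Nat.cast_nonneg (α := ℝ) #U]

theorem memGm_of_forall_exists_adj {m : ℕ} (hm : 20 ≤ m) {U : Finset V} {Adj : V → V → Prop}
    (h : ∀ (P : V → Fin (sBound m)) (R : Fin (sBound m) → Fin (sBound m) → Prop),
      (∀ i, ¬ R i i) → 0.2 * (#U : ℝ) ^ 2 ≤ #(classPairs P R U) →
      ∃ p ∈ classPairs P R U, Adj p.1 p.2) :
    MemGm m U Adj := by
  intro P hP
  let A (i j : Fin (sBound m)) : Prop := ∃ u ∈ U, ∃ v ∈ U, P u = i ∧ P v = j ∧ Adj u v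
  by_contra! hsparse
  have hA : (#(classPairs P (fun i j => i < j ∧ A i j) U) : ℝ) ≤ 0.55 * (#U * (#U - 1) / 2) := by
    rw [card_classPairs]
    push_cast
    exact hsparse
  obtain ⟨⟨x, y⟩, hxy, hadj⟩ := h P (fun i j => i < j ∧ ¬ A i j) (fun i hi => hi.1.false)
    (le_card_classPairs_lt_and_not P U A hm (fun i => by convert hP i) hA)
  simp only [classPairs, mem_filter, mem_product] at hxy
  obtain ⟨⟨hx, hy⟩, -, hnot⟩ := hxy
  exact hnot ⟨x, hx, y, hy, rfl, rfl, hadj⟩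

end ClassPairs

section Tuples

variable {V : Type*} [DecidableEq V] {r : ℕ}

/-- The set of entries of a tuple `((x, y), w)`, the candidate hyperedge that would make `x` and
`y` adjacent in `H(U; W_1, …, W_r)` through `w_1, …, w_r`. -/
def tupleEdge (t : (V × V) × (Fin r → V)) : Finset V :=
  {t.1.1, t.1.2} ∪ image t.2 univ

theorem card_tupleEdge_le (t : (V × V) × (Fin r → V)) : #(tupleEdge t) ≤ r + 2 := by
  have hpair : #{t.1.1, t.1.2} ≤ 2 := card_le_two
  have himage : #(image t.2 univ) ≤ r := by simpa using card_image_le (s := univ) (f := t.2)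
  have hunion : #(tupleEdge t) ≤ _ := card_union_le _ _
  omega

theorem card_tupleEdge {x y : V} {w : Fin r → V} (hxy : x ≠ y) (hw : Function.Injective w)
    (hx : ∀ l, w l ≠ x) (hy : ∀ l, w l ≠ y) : #(tupleEdge ((x, y), w)) = r + 2 := by
  have hdisj : Disjoint {x, y} (image w univ) := by simp [hx, hy]
  rw [tupleEdge, card_union_of_disjoint hdisj, card_pair hxy, card_image_of_injective _ hw,
    card_univ, Fintype.card_fin, add_comm]

end Tuples

section Hitting

variable {V : Type*} [Fintype V] {r : ℕ}

/-- A sequence of tuples is `(s, γ, β)`-hitting if it meets every product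
`classPairs P R U × W_1 × ⋯ × W_r` in which `P` has `s` classes, the set of pairs has density at
least `γ` in `V × V`, and each `W_l` has density at least `β` in `V`. -/
def IsHitting {ι : Type*} (s : ℕ) (γ β : ℝ) (f : ι → (V × V) × (Fin r → V)) : Prop :=
  ∀ (P : V → Fin s) (R : Fin s → Fin s → Prop) (U : Finset V) (W : Fin r → Finset V),
    γ * Fintype.card V ^ 2 ≤ #(classPairs P R U) → (∀ l, β * Fintype.card V ≤ #(W l)) →
    ∃ q, (f q).1 ∈ classPairs P R U ∧ ∀ l, (f q).2 l ∈ W l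

/-- The data `(P, R, U, W)` of a product `classPairs P R U × W_1 × ⋯ × W_r` of tuples over `V`,
with `s` classes; relations are encoded as sets of pairs so that they can be counted. -/
abbrev BoxData (V : Type*) (s r : ℕ) : Type _ :=
  (V → Fin s) × Set (Fin s × Fin s) × Finset V × (Fin r → Finset V)

theorem card_boxData_lt_exp [Nonempty V] {m s : ℕ} (r : ℕ) (hs : s ≤ 2 ^ m)
    (hsV : s ^ 2 ≤ Fintype.card V) :
    (Fintype.card (BoxData V s r) : ℝ) < Real.exp (Fintype.card V * (m + r + 2)) := by
  have card_le : Fintype.card (BoxData V s r) ≤ 2 ^ (Fintype.card V * (m + r + 2)) := by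
    simp only [BoxData, Fintype.card_prod, Fintype.card_fun, Fintype.card_set, Fintype.card_finset,
      Fintype.card_fin]
    set n := Fintype.card V
    calc s ^ n * (2 ^ (s * s) * (2 ^ n * (2 ^ n) ^ r))
        ≤ (2 ^ m) ^ n * (2 ^ n * (2 ^ n * (2 ^ n) ^ r)) := by
          rw [← sq]
          gcongr
          norm_num
      _ = 2 ^ (n * (m + r + 2)) := by ring
  have hN : Fintype.card V * (m + r + 2) ≠ 0 := mul_ne_zero Fintype.card_ne_zero (by omega)
  calc (Fintype.card (BoxData V s r) : ℝ) ≤ 2 ^ (Fintype.card V * (m + r + 2)) := by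
        exact_mod_cast card_le
    _ < Real.exp 1 ^ (Fintype.card V * (m + r + 2)) :=
        pow_lt_pow_left₀ Real.exp_one_gt_two (by norm_num) hN
    _ = Real.exp (Fintype.card V * (m + r + 2)) := by
        rw [← Real.exp_nat_mul]
        push_cast
        rw [mul_one]

theorem exists_isHitting [Nonempty V] {m s M : ℕ} {γ β : ℝ} (hβ : 0 ≤ β) (hs : s ≤ 2 ^ m)
    (hsV : s ^ 2 ≤ Fintype.card V)
    (hM : (Fintype.card V * (m + r + 2) : ℝ) ≤ γ * β ^ r * M) :
    ∃ f : Fin M → (V × V) × (Fin r → V), IsHitting s γ β f := by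
  let box (c : BoxData V s r) : Finset ((V × V) × (Fin r → V)) :=
    classPairs c.1 (fun i j => (i, j) ∈ c.2.1) c.2.2.1 ×ˢ Fintype.piFinset c.2.2.2
  obtain ⟨f, hf⟩ := exists_seq_hitting_dense_sets box M (γ * β ^ r) <|
    (card_boxData_lt_exp r hs hsV).trans_le (Real.exp_le_exp.2 hM)
  set n := Fintype.card V with hn
  refine ⟨f, fun P R U W hpairs hW => ?_⟩
  have hprod : (β * n) ^ r ≤ ∏ l, (#(W l) : ℝ) := by
    simpa using prod_le_prod (s := univ) (fun _ _ => by positivity) fun l _ => hW l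
  obtain ⟨q, hq⟩ := hf (P, {p | R p.1 p.2}, U, W) <| by
    simp only [box, card_product, Fintype.card_piFinset, Fintype.card_prod, Fintype.card_fun,
      Fintype.card_fin, ← hn]
    push_cast
    calc γ * β ^ r * (n * n * n ^ r) = γ * n ^ 2 * (β * n) ^ r := by ring
      _ ≤ #(classPairs P R U) * ∏ l, (#(W l) : ℝ) := by gcongr
  simp only [box, mem_product, Fintype.mem_piFinset] at hq
  exact ⟨q, hq⟩

end Hitting

section Goodness

variable {V : Type*} [Fintype V] [DecidableEq V] {r : ℕ}

theorem hAdj_prunedEdges {ι : Type*} [Fintype ι] {f : ι → (V × V) × (Fin r → V)} {L : ℝ}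
    {U : Finset V} {W : Fin r → Finset V} (hUW : ∀ l, Disjoint U (W l))
    (hWW : ∀ i j, i ≠ j → Disjoint (W i) (W j)) {q : ι} (hne : (f q).1.1 ≠ (f q).1.2)
    (hx : (f q).1.1 ∈ U \ heavyVertices (fun q => tupleEdge (f q)) L)
    (hy : (f q).1.2 ∈ U \ heavyVertices (fun q => tupleEdge (f q)) L)
    (hw : ∀ l, (f q).2 l ∈ W l \ heavyVertices (fun q => tupleEdge (f q)) L) :
    hAdj (prunedEdges (fun q => tupleEdge (f q)) (r + 2) L) W (f q).1.1 (f q).1.2 := by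
  simp only [mem_sdiff] at hx hy hw
  refine ⟨hne, (f q).2, fun l => (hw l).1, ?_⟩
  have hinj : Function.Injective (f q).2 := fun i j hij => by
    by_contra hij'
    exact disjoint_left.1 (hWW i j hij') (hw i).1 (hij ▸ (hw j).1)
  have hcard : #(tupleEdge (f q)) = r + 2 := card_tupleEdge hne hinj
    (fun l h => disjoint_left.1 (hUW l) hx.1 (h ▸ (hw l).1))
    (fun l h => disjoint_left.1 (hUW l) hy.1 (h ▸ (hw l).1))
  have hlight : Disjoint (tupleEdge (f q)) (heavyVertices (fun q => tupleEdge (f q)) L) := by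
    simp only [tupleEdge, disjoint_left, mem_union, mem_insert, mem_singleton, mem_image, mem_univ,
      true_and]
    rintro a ((rfl | rfl) | ⟨l, rfl⟩)
    exacts [hx.2, hy.2, (hw l).2]
  exact mem_filter.2 ⟨mem_image_of_mem _ (mem_univ q), hcard, hlight⟩

theorem isGood_prunedEdges {ι : Type*} [Fintype ι] {f : ι → (V × V) × (Fin r → V)} {m : ℕ}
    {α L : ℝ} (hm : 20 ≤ m) (hα : 0 ≤ α)
    (hf : IsHitting (sBound m) (0.1 * α ^ 2) (α / 2) f)
    (hheavy : #(heavyVertices (fun q => tupleEdge (f q)) L) ≤ α * Fintype.card V / 20) :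
    IsGood (r + 2) m α univ (prunedEdges (fun q => tupleEdge (f q)) (r + 2) L) := by
  intro U W _ _ hUW hWW hU hW
  set B := heavyVertices (fun q => tupleEdge (f q)) L
  rw [card_univ] at hU
  simp only [card_univ] at hW
  refine memGm_of_forall_exists_adj hm fun P R hR hpairs => ?_
  have hpairs_light : 0.1 * α ^ 2 * Fintype.card V ^ 2 ≤ #(classPairs P R (U \ B)) := by
    have hremoved : (#(classPairs P R U) : ℝ) ≤ #(classPairs P R (U \ B)) + 2 * #U * #B := by
      exact_mod_cast card_classPairs_le_sdiff P R U B
    have hUB : 2 * (#U : ℝ) * #B ≤ 2 * #U * (#U / 20) := by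
      gcongr
      linarith
    have hU2 : (α * Fintype.card V) ^ 2 ≤ (#U : ℝ) ^ 2 := by gcongr
    linarith
  have hW_light (l : Fin r) : α / 2 * Fintype.card V ≤ #(W l \ B) := by
    have hremoved : (#(W l) : ℝ) ≤ #(W l \ B) + #B := by
      exact_mod_cast card_le_card_sdiff_add_card
    linarith [hW l, show 0 ≤ α * Fintype.card V by positivity]
  obtain ⟨q, hq, hw⟩ := hf P R (U \ B) (fun l => W l \ B) hpairs_light hW_light
  simp only [classPairs, mem_filter, mem_product] at hq
  obtain ⟨⟨hx, hy⟩, hRq⟩ := hq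
  have hne : (f q).1.1 ≠ (f q).1.2 := fun h => hR _ (h ▸ hRq)
  refine ⟨(f q).1, ?_, hAdj_prunedEdges hUW hWW hne hx hy hw⟩
  exact mem_filter.2 ⟨mem_product.2 ⟨(mem_sdiff.1 hx).1, (mem_sdiff.1 hy).1⟩, hRq⟩

end Goodness

section Parameters

theorem sBound_pos (m : ℕ) : 0 < sBound m :=
  Nat.floor_pos.2 <| Real.one_le_rpow (by norm_num) (by positivity)

theorem sBound_sq_le_two_pow (m : ℕ) : sBound m ^ 2 ≤ 2 ^ m := by
  have hfloor : (sBound m : ℝ) ≤ (2 : ℝ) ^ ((m : ℝ) / 10 ^ 8) := Nat.floor_le (by positivity)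
  have : (sBound m : ℝ) ^ 2 ≤ 2 ^ m := calc
    (sBound m : ℝ) ^ 2 ≤ ((2 : ℝ) ^ ((m : ℝ) / 10 ^ 8)) ^ 2 := by gcongr
    _ = (2 : ℝ) ^ ((m : ℝ) / 10 ^ 8 * (2 : ℕ)) := (Real.rpow_mul_natCast (by norm_num) _ _).symm
    _ ≤ (2 : ℝ) ^ (m : ℝ) := by
        gcongr
        · norm_num
        · push_cast
          linarith [Nat.cast_nonneg (α := ℝ) m]
    _ = 2 ^ m := Real.rpow_natCast _ _
  exact_mod_cast this

theorem hundred_mul_sq_mul_pow_le {k : ℕ} (hk : 1 ≤ k) {x : ℝ} (hx : 1 ≤ x) :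
    100 * (k : ℝ) ^ 2 * (2 * x) ^ k * x ≤ (16 * x) ^ (5 * k) := by
  have hk2 : (k : ℝ) ≤ 2 ^ k := by exact_mod_cast Nat.lt_two_pow_self.le
  have hconst : (100 : ℝ) ≤ 100 ^ k := le_self_pow₀ (by norm_num) (by omega)
  calc 100 * (k : ℝ) ^ 2 * (2 * x) ^ k * x ≤ 100 ^ k * (2 ^ k) ^ 2 * (2 * x) ^ k * x ^ k := by
        gcongr
        exact le_self_pow₀ hx (by omega)
    _ = (800 * x ^ 2) ^ k := by
        rw [← pow_mul, mul_comm k 2, pow_mul, ← mul_pow, ← mul_pow, ← mul_pow]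
        ring
    _ ≤ (16 ^ 5 * x ^ 5) ^ k := by
        gcongr <;> norm_num
    _ = (16 * x) ^ (5 * k) := by rw [← mul_pow, ← pow_mul]

theorem card_heavyVertices_tupleEdge_le {V : Type*} [Fintype V] [DecidableEq V]
    {ι : Type*} [Fintype ι] {r m : ℕ} {α : ℝ} (f : ι → (V × V) × (Fin r → V)) (hα : 0 < α)
    (hα1 : α ≤ 1) (hm : 2 ≤ m)
    (hι : Fintype.card ι ≤ 2 * (Fintype.card V * (m + r + 2) / (0.1 * α ^ 2 * (α / 2) ^ r))) :
    #(heavyVertices (fun q => tupleEdge (f q)) ((16 / α) ^ (5 * (r + 2)) * m)) ≤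
      α * Fintype.card V / 20 := by
  set n := Fintype.card V
  have hm2 : (2 : ℝ) ≤ m := by exact_mod_cast hm
  have hι' : (Fintype.card ι : ℝ) ≤ 5 * n * m * (r + 2) * (2 * (1 / α)) ^ (r + 2) := calc
    (Fintype.card ι : ℝ) ≤ 2 * (n * (m + r + 2) / (0.1 * α ^ 2 * (α / 2) ^ r)) := hι
    _ ≤ 2 * (n * (m * (r + 2)) / (0.1 * α ^ 2 * (α / 2) ^ r)) := by
        gcongr
        nlinarith [Nat.cast_nonneg (α := ℝ) r]
    _ = 5 * n * m * (r + 2) * (2 * (1 / α)) ^ (r + 2) := by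
        rw [pow_add, mul_one_div, ← inv_div α 2, inv_pow, inv_pow]
        field_simp
        ring
  have hconst := hundred_mul_sq_mul_pow_le (k := r + 2) (by omega) ((one_le_div hα).2 hα1)
  rw [mul_one_div 16] at hconst
  push_cast at hconst
  set C := (16 / α) ^ (5 * (r + 2))
  have hheavy := card_heavyVertices_mul_le (fun q => tupleEdge (f q)) (C * m)
    fun q => card_tupleEdge_le (f q)
  refine le_of_mul_le_mul_right (hheavy.trans ?_) (by positivity : 0 < C * m)
  push_cast
  calc (r + 2 : ℝ) * Fintype.card ι
      ≤ (r + 2) * (5 * n * m * (r + 2) * (2 * (1 / α)) ^ (r + 2)) := by gcongr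
    _ = α * n * m / 20 * (100 * (r + 2) ^ 2 * (2 * (1 / α)) ^ (r + 2) * (1 / α)) := by
        field_simp
        ring
    _ ≤ α * n * m / 20 * C := by gcongr
    _ = α * n / 20 * (C * m) := by ring

theorem exists_isHitting_card_heavyVertices_le {V : Type*} [Fintype V] [DecidableEq V] (r : ℕ)
    {m : ℕ} {α : ℝ} (hα : 0 < α) (hα1 : α ≤ 1) (hm : 2 ≤ m)
    (hV : sBound m ^ 2 ≤ Fintype.card V) :
    ∃ (M : ℕ) (f : Fin M → (V × V) × (Fin r → V)),
      IsHitting (sBound m) (0.1 * α ^ 2) (α / 2) f ∧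
      #(heavyVertices (fun q => tupleEdge (f q)) ((16 / α) ^ (5 * (r + 2)) * m)) ≤
        α * Fintype.card V / 20 := by
  have hVpos : 0 < Fintype.card V := (pow_pos (sBound_pos m) 2).trans_le hV
  have : Nonempty V := Fintype.card_pos_iff.1 hVpos
  set δ := 0.1 * α ^ 2 * (α / 2) ^ r with hδ
  let x : ℝ := Fintype.card V * (m + r + 2) / δ
  have hδ0 : 0 < δ := by positivity
  have hδ1 : δ ≤ 1 := by
    have hsq : α ^ 2 ≤ 1 := pow_le_one₀ hα.le hα1
    have hpow : (α / 2) ^ r ≤ 1 := pow_le_one₀ (by positivity) (by linarith)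
    nlinarith
  have hx : 2⁻¹ ≤ x := by
    rw [le_div_iff₀ hδ0]
    have : (1 : ℝ) ≤ Fintype.card V := by exact_mod_cast hVpos
    nlinarith
  obtain ⟨f, hf⟩ : ∃ f : Fin ⌈x⌉₊ → (V × V) × (Fin r → V),
      IsHitting (sBound m) (0.1 * α ^ 2) (α / 2) f :=
    exists_isHitting (by positivity) ((Nat.le_pow two_pos).trans (sBound_sq_le_two_pow m)) hV
      ((div_le_iff₀' hδ0).1 (Nat.le_ceil x))
  refine ⟨⌈x⌉₊, f, hf, card_heavyVertices_tupleEdge_le f hα hα1 hm ?_⟩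
  rw [Fintype.card_fin]
  exact Nat.ceil_le_two_mul hx

end Parameters

theorem stmt_10_general {V : Type*} [Fintype V] [DecidableEq V] (k : ℕ) (hk : 2 ≤ k) (α : ℝ)
    (hα : α ∈ Set.Ioc (0 : ℝ) 1) (m : ℕ) (hm : 20 ≤ m) (hV : sBound m ^ 2 ≤ Fintype.card V) :
    ∃ E : Finset (Finset V),
      (∀ e ∈ E, e.card = k) ∧
      IsGood k m α Finset.univ E ∧
      ∀ v : V, ((E.filter fun e => v ∈ e).card : ℝ) ≤ (16 / α) ^ (5 * k) * m := by
  obtain ⟨r, rfl⟩ := Nat.exists_eq_add_of_le' hk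
  obtain ⟨hα0, hα1⟩ := hα
  obtain ⟨M, f, hf, hheavy⟩ :=
    exists_isHitting_card_heavyVertices_le r hα0 hα1 (by omega : 2 ≤ m) hV
  exact ⟨prunedEdges (fun q => tupleEdge (f q)) (r + 2) ((16 / α) ^ (5 * (r + 2)) * m),
    fun e he => (mem_filter.1 he).2.1, isGood_prunedEdges hm hα0.le hf hheavy,
    degree_prunedEdges_le _ _ (by positivity)⟩

/-- For `k ≥ 3`, `α ∈ (0,1]`, `C = (16/α)^{5k}`, any `m ≥ 10⁹` and `n` with `n ≥ C·m` and
`α·n/2 ≥ 2^m`, there is an `n`-vertex `(α, m)`-good `k`-uniform hypergraph with maximum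
degree at most `C·m`. -/
theorem stmt_10 (k : ℕ) (hk : 3 ≤ k) (α : ℝ) (hα : α ∈ Set.Ioc (0 : ℝ) 1)
    (m n : ℕ) (hm : 10 ^ 9 ≤ m) (hn : (16 / α) ^ (5 * k) * m ≤ (n : ℝ))
    (hn2 : (2 : ℝ) ^ m ≤ α * n / 2) :
    ∃ E : Finset (Finset (Fin n)),
      (∀ e ∈ E, e.card = k) ∧
      IsGood k m α Finset.univ E ∧
      ∀ v : Fin n, ((E.filter fun e => v ∈ e).card : ℝ) ≤ (16 / α) ^ (5 * k) * m := by
  have hpow : (2 : ℝ) ^ m ≤ n := by nlinarith [hα.2, n.cast_nonneg (α := ℝ)]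
  exact stmt_10_general k (by omega) α hα m (by omega) <|
    (sBound_sq_le_two_pow m).trans (by rw [Fintype.card_fin]; exact_mod_cast hpow)
end
end
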